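/- arXiv:1706.04079 — 3 statements merged into one kernel-verified Lean document; each statement's English description precedes it below -/
import Mathlib

section
/- Let s ∈ (0,∞) and let (a_n)_{n≥0} be a decreasing sequence of nonnegative real numbers, and let f(z) = ∑_{n=0}^∞ a_n z^n (which is analytic on the unit disc 𝔻 since (a_n) is bounded). Then f ∈ Q_s if and only if a_n = O(1/n) as n → ∞. -/
open MeasureTheory Set Metric ENNReal

noncomputable section

namespace PaperHankel

/-- The moment of order `n` of a measure on `[0,1)`:  `μ_n = ∫_{[0,1)} t^n dμ(t)`. -/
def mom (μ : Measure ℝ) (n : ℕ) : ℝ := ∫ t in Ico (0:ℝ) 1, t ^ n ∂μ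

/-- The `n`-th Taylor coefficient of `f` at `0`. -/
def tc (f : ℂ → ℂ) (n : ℕ) : ℂ := iteratedDeriv n f 0 / n.factorial

/-- The `n`-th Taylor coefficient of `H_μ f`, namely `∑_k μ_{n+k} a_k`. -/
def hmuCoeff (μ : Measure ℝ) (f : ℂ → ℂ) (n : ℕ) : ℂ :=
  ∑' k : ℕ, (mom μ (n + k) : ℂ) * tc f k

/-- `H_μ f` is well defined: each coefficient series converges absolutely, and the resulting
power series has radius of convergence at least `1`. -/
def HmuWD (μ : Measure ℝ) (f : ℂ → ℂ) : Prop :=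
  (∀ n : ℕ, Summable fun k : ℕ => ‖(mom μ (n + k) : ℂ) * tc f k‖) ∧
  ∀ z ∈ ball (0:ℂ) 1, Summable fun n : ℕ => ‖hmuCoeff μ f n * z ^ n‖

/-- The generalized Hilbert operator induced by the Hankel matrix of moments of `μ`. -/
def Hmu (μ : Measure ℝ) (f : ℂ → ℂ) : ℂ → ℂ :=
  fun z => ∑' n : ℕ, hmuCoeff μ f n * z ^ n

/-- `I_μ f` is well defined: the defining integral converges absolutely for every `z ∈ 𝔻`. -/
def ImuWD (μ : Measure ℝ) (f : ℂ → ℂ) : Prop :=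
  ∀ z ∈ ball (0:ℂ) 1, IntegrableOn (fun t : ℝ => f t / (1 - t * z)) (Ico (0:ℝ) 1) μ

/-- The integral operator `I_μ f (z) = ∫_{[0,1)} f(t)/(1-tz) dμ(t)`. -/
def Imu (μ : Measure ℝ) (f : ℂ → ℂ) : ℂ → ℂ :=
  fun z => ∫ t in Ico (0:ℝ) 1, f t / (1 - t * z) ∂μ

/-- The `p`-th circle mean `M_p(r,f)` raised into the Hardy norm shape:
`((1/2π) ∫_0^{2π} |f(r e^{iθ})|^p dθ)^{1/p}`. -/
def circMean (p : ℝ) (f : ℂ → ℂ) (r : ℝ) : ℝ :=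
  ((2 * Real.pi)⁻¹ * ∫ θ in (0:ℝ)..(2 * Real.pi),
      ‖f (r * Complex.exp (θ * Complex.I))‖ ^ p) ^ (1 / p)

/-- Membership in the Hardy space `H^p`. -/
def MemHardy (p : ℝ) (f : ℂ → ℂ) : Prop :=
  DifferentiableOn ℂ f (ball (0:ℂ) 1) ∧ ∃ M : ℝ, ∀ r ∈ Ico (0:ℝ) 1, circMean p f r ≤ M

/-- The `H^p` norm. -/
def hardyNorm (p : ℝ) (f : ℂ → ℂ) : ℝ :=
  sSup {x : ℝ | ∃ r ∈ Ico (0:ℝ) 1, x = circMean p f r}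

/-- Membership in `H^∞`: analytic and bounded on the unit disc. -/
def MemHinf (f : ℂ → ℂ) : Prop :=
  DifferentiableOn ℂ f (ball (0:ℂ) 1) ∧ ∃ M : ℝ, ∀ z ∈ ball (0:ℂ) 1, ‖f z‖ ≤ M

/-- The `H^∞` norm. -/
def hinfNorm (f : ℂ → ℂ) : ℝ := sSup {x : ℝ | ∃ z ∈ ball (0:ℂ) 1, x = ‖f z‖}

/-- The mean `M_2(r,g) = ((1/2π) ∫_0^{2π} |g(r e^{iθ})|² dθ)^{1/2}`. -/
def M2 (g : ℂ → ℂ) (r : ℝ) : ℝ :=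
  Real.sqrt ((2 * Real.pi)⁻¹ * ∫ θ in (0:ℝ)..(2 * Real.pi),
      ‖g (r * Complex.exp (θ * Complex.I))‖ ^ 2)

/-- Membership in the mean Lipschitz space `Λ²_{1/2}`:
`M_2(r,f') = O((1-r)^{-1/2})` as `r → 1⁻`. -/
def MemLambda (f : ℂ → ℂ) : Prop :=
  DifferentiableOn ℂ f (ball (0:ℂ) 1) ∧
  ∃ C : ℝ, ∀ r ∈ Ico (0:ℝ) 1, Real.sqrt (1 - r) * M2 (deriv f) r ≤ C

/-- The norm on `Λ²_{1/2}`. -/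
def lambdaNorm (f : ℂ → ℂ) : ℝ :=
  ‖f 0‖ + sSup {x : ℝ | ∃ r ∈ Ico (0:ℝ) 1, x = Real.sqrt (1 - r) * M2 (deriv f) r}

/-- `∫_𝔻 |f'(z)|² g(z,a)^s dA(z)` with `g(z,a) = log |(1- ā z)/(z-a)|` and `dA` the
normalized area measure, computed as a lower integral in `[0,∞]`. -/
def qsInt (s : ℝ) (f : ℂ → ℂ) (a : ℂ) : ℝ≥0∞ :=
  (ENNReal.ofReal Real.pi)⁻¹ * ∫⁻ z in ball (0:ℂ) 1,
    ENNReal.ofReal (‖deriv f z‖ ^ 2 * (Real.log ‖(1 - (starRingEnd ℂ) a * z) / (z - a)‖) ^ s)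

/-- Membership in `Q_s`: analytic on `𝔻` with `ρ_{Q_s}(f)² = sup_{a ∈ 𝔻} ∫ ... < ∞`. -/
def MemQs (s : ℝ) (f : ℂ → ℂ) : Prop :=
  DifferentiableOn ℂ f (ball (0:ℂ) 1) ∧ (⨆ a ∈ ball (0:ℂ) 1, qsInt s f a) < ⊤

/-- The norm on `Q_s`, `‖f‖ = |f(0)| + ρ_{Q_s}(f)`. -/
def qsNorm (s : ℝ) (f : ℂ → ℂ) : ℝ :=
  ‖f 0‖ + Real.sqrt (⨆ a ∈ ball (0:ℂ) 1, qsInt s f a).toReal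

/-- The condition `∫_{[0,1)} tⁿ log(1/(1-t)) dμ(t) = O(1/n)`, stated with the lower
integral so that in particular the integrals are finite. -/
def LogMomentBigO (μ : Measure ℝ) : Prop :=
  ∃ C > 0, ∀ n : ℕ, 1 ≤ n →
    (∫⁻ t in Ico (0:ℝ) 1, ENNReal.ofReal (t ^ n * Real.log (1 / (1 - t))) ∂μ) ≤
      ENNReal.ofReal (C / n)

/-- Membership in the Bloch space. -/
def MemBloch (f : ℂ → ℂ) : Prop :=
  DifferentiableOn ℂ f (ball (0:ℂ) 1) ∧
  ∃ M : ℝ, ∀ z ∈ ball (0:ℂ) 1, (1 - ‖z‖ ^ 2) * ‖deriv f z‖ ≤ M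

/-- The Bloch norm `‖f‖ = |f(0)| + ρ_B(f)`. -/
def blochNorm (f : ℂ → ℂ) : ℝ :=
  ‖f 0‖ + sSup {x : ℝ | ∃ z ∈ ball (0:ℂ) 1, x = (1 - ‖z‖ ^ 2) * ‖deriv f z‖}

/-- Membership in the Besov space `B^p`. -/
def MemBesov (p : ℝ) (f : ℂ → ℂ) : Prop :=
  DifferentiableOn ℂ f (ball (0:ℂ) 1) ∧
  IntegrableOn (fun z : ℂ => (1 - ‖z‖ ^ 2) ^ (p - 2) * ‖deriv f z‖ ^ p) (ball (0:ℂ) 1) volume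

/-- The Besov norm `‖f‖ = |f(0)| + ρ_p(f)`. -/
def besovNorm (p : ℝ) (f : ℂ → ℂ) : ℝ :=
  ‖f 0‖ + (Real.pi⁻¹ *
    ∫ z in ball (0:ℂ) 1, (1 - ‖z‖ ^ 2) ^ (p - 2) * ‖deriv f z‖ ^ p) ^ (1 / p)

/-- `μ` is an `α`-logarithmic `s`-Carleson measure on `[0,1)`. -/
def IsLogCarleson (μ : Measure ℝ) (α s : ℝ) : Prop :=
  ∃ C > 0, ∀ t ∈ Ico (0:ℝ) 1,
    (μ (Ico t 1)).toReal * Real.log (2 / (1 - t)) ^ α ≤ C * (1 - t) ^ s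

/-- `μ` is an `s`-Carleson measure on `[0,1)`. -/
def IsCarleson (μ : Measure ℝ) (s : ℝ) : Prop :=
  ∃ C > 0, ∀ t ∈ Ico (0:ℝ) 1, (μ (Ico t 1)).toReal ≤ C * (1 - t) ^ s

/-!
The argument passes through the inclusions `Λ²_{1/2} ⊆ Q_s ⊆ Bloch`.

If `n a_n ≤ C`, Parseval's identity gives `M_2(r, f')² ≤ C² ∑ rⁿ = C² / (1 - r)`, that is
`f ∈ Λ²_{1/2}`. For such an `f`, polar coordinates bound the part of the `Q_s` integral away from
the pole `a`: with `ρ = 1 - |a|` and `t = 1 - |z|` the Green function there is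
`O(min (t / ρ) (ρ / t))`, and `∫ min (t / ρ) (ρ / t) ^ s dt / t` does not depend on `ρ`. Near the
pole, the Green function to the power `s` is dominated by the integrable function `ρ / |z - a|`,
while `|f'| = O(1 / ρ)` because `Λ²_{1/2}` is contained in the Bloch space.

Conversely, the Green function is at least `1` on the disc of radius `ρ / 4` about its pole, so the
sub-mean value property of `|f'|²` shows that functions in `Q_s` are Bloch. Finally, monotonicity
gives `f'(r) ≥ ∑_{k ≤ n} k a_k r^(k - 1) ≳ n² a_n` at `r = 1 - 1 / (2n)`, whereas the Bloch
condition gives `f'(r) = O(n)`.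
-/


open scoped Real ComplexConjugate

section CircleAverage

open Filter Topology

lemma hasSum_sq_norm_circleAverage_zero_one {c : ℕ → ℂ} {F : ℂ → ℂ} (hc : Summable fun n ↦ ‖c n‖)
    (hF : ∀ z ∈ sphere (0 : ℂ) 1, HasSum (fun n ↦ c n * z ^ n) (F z)) :
    HasSum (fun n ↦ ‖c n‖ ^ 2) (Real.circleAverage (fun z ↦ ‖F z‖ ^ 2) 0 1) := by
  let p (N : ℕ) : Polynomial ℂ := ∑ n ∈ Finset.range N, Polynomial.monomial n (c n)
  have p_eval (N : ℕ) (z : ℂ) : (p N).eval z = ∑ n ∈ Finset.range N, c n * z ^ n := by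
    simp only [p, Polynomial.eval_finsetSum, Polynomial.eval_monomial]
  have p_coeff (N n : ℕ) : (p N).coeff n = if n < N then c n else 0 := by
    simp [p, Polynomial.coeff_monomial]
  have parseval_p (N : ℕ) : Real.circleAverage (fun z ↦ ‖(p N).eval z‖ ^ 2) 0 1 =
      ∑ n ∈ Finset.range N, ‖c n‖ ^ 2 := by
    have support_subset : (p N).support ⊆ Finset.range N := fun n hn ↦ by
      by_contra h
      simp_all [Polynomial.mem_support_iff]
    rw [← Polynomial.sum_sq_norm_coeff_eq_circleAverage,
      Finset.sum_subset support_subset fun n _ hn ↦ by simp [Polynomial.notMem_support_iff.1 hn]]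
    exact Finset.sum_congr rfl fun n hn ↦ by rw [p_coeff, if_pos (Finset.mem_range.1 hn)]
  have circleMap_mem (θ : ℝ) : circleMap 0 1 θ ∈ sphere (0 : ℂ) 1 :=
    circleMap_mem_sphere 0 zero_le_one θ
  have p_eval_le (N : ℕ) (θ : ℝ) : ‖(p N).eval (circleMap 0 1 θ)‖ ≤ ∑' n, ‖c n‖ := by
    rw [p_eval]
    refine (norm_sum_le _ _).trans ((Finset.sum_le_sum fun n _ ↦ ?_).trans
      (hc.sum_le_tsum (Finset.range N) fun n _ ↦ norm_nonneg _))
    simp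
  have tendsto_average : Tendsto (fun N ↦ Real.circleAverage (fun z ↦ ‖(p N).eval z‖ ^ 2) 0 1)
      atTop (𝓝 (Real.circleAverage (fun z ↦ ‖F z‖ ^ 2) 0 1)) := by
    simp only [Real.circleAverage_def]
    refine (intervalIntegral.tendsto_integral_filter_of_dominated_convergence
      (fun _ ↦ (∑' n, ‖c n‖) ^ 2) (.of_forall fun N ↦ ?_) (.of_forall fun N ↦ ?_)
      intervalIntegrable_const ?_).const_smul _
    · exact Continuous.aestronglyMeasurable (by fun_prop)
    · refine ae_of_all _ fun θ _ ↦ ?_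
      rw [norm_pow, norm_norm]
      gcongr
      exact p_eval_le N θ
    · refine ae_of_all _ fun θ _ ↦ ?_
      simp only [p_eval]
      exact (hF _ (circleMap_mem θ)).tendsto_sum_nat.norm.pow 2
  simp only [parseval_p] at tendsto_average
  exact (hasSum_iff_tendsto_nat_of_nonneg (fun n ↦ by positivity) _).2 tendsto_average

lemma hasSum_sq_norm_circleAverage {c : ℕ → ℂ} {F : ℂ → ℂ} {r : ℝ} (hr : 0 ≤ r)
    (hc : Summable fun n ↦ ‖c n‖ * r ^ n)
    (hF : ∀ z ∈ sphere (0 : ℂ) r, HasSum (fun n ↦ c n * z ^ n) (F z)) :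
    HasSum (fun n ↦ (‖c n‖ * r ^ n) ^ 2) (Real.circleAverage (fun z ↦ ‖F z‖ ^ 2) 0 r) := by
  have norm_coeff (n : ℕ) : ‖c n * (r : ℂ) ^ n‖ = ‖c n‖ * r ^ n := by simp [abs_of_nonneg hr]
  have scaled := hasSum_sq_norm_circleAverage_zero_one (c := fun n ↦ c n * (r : ℂ) ^ n)
    (F := fun z ↦ F (r * z)) (by simpa only [norm_coeff] using hc) fun z hz ↦ by
      simpa only [mul_pow, mul_assoc] using hF (r * z) (by simp_all [abs_of_nonneg hr])
  rw [Real.circleAverage_eq_circleAverage_zero_one]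
  simpa only [norm_coeff, add_zero] using scaled

lemma norm_le_circleAverage_norm {E : Type*} [NormedAddCommGroup E] [NormedSpace ℂ E]
    [CompleteSpace E] {F : ℂ → E} {c : ℂ} {r : ℝ} (hF : DiffContOnCl ℂ F (ball c |r|)) :
    ‖F c‖ ≤ Real.circleAverage (fun z ↦ ‖F z‖) c r := by
  rw [← hF.circleAverage, Real.circleAverage_def, Real.circleAverage_def, norm_smul, smul_eq_mul,
    Real.norm_of_nonneg (by positivity)]
  gcongr
  exact intervalIntegral.norm_integral_le_integral_norm Real.two_pi_pos.le

lemma lintegral_circleMap_eq_circleAverage {u : ℂ → ℝ} {c : ℂ} {r : ℝ} (hu₀ : ∀ z, 0 ≤ u z)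
    (hu : CircleIntegrable u c r) :
    ∫⁻ θ in Ioo (-π) π, ENNReal.ofReal (u (circleMap c r θ)) =
      ENNReal.ofReal (2 * π * Real.circleAverage u c r) := by
  have integral_eq : 2 * π * Real.circleAverage u c r = ∫ θ in (-π)..π, u (circleMap c r θ) := by
    rw [Real.circleAverage_eq_integral_add (-π), smul_eq_mul, ← mul_assoc,
      mul_inv_cancel₀ Real.two_pi_pos.ne', one_mul,
      intervalIntegral.integral_comp_add_right (fun θ ↦ u (circleMap c r θ))]
    ring_nf
  have integrable_circle : IntervalIntegrable (fun θ ↦ u (circleMap c r θ)) volume (-π) π :=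
    ((periodic_circleMap c r).comp u).intervalIntegrable₀ Real.two_pi_pos.ne' hu _ _
  rw [integral_eq, intervalIntegral.integral_of_le (by linarith [Real.pi_pos]),
    integral_Ioc_eq_integral_Ioo, ofReal_integral_eq_lintegral_ofReal _ (ae_of_all _ fun θ ↦ hu₀ _)]
  exact (intervalIntegrable_iff_integrableOn_Ioo_of_le (by linarith [Real.pi_pos])).1
    integrable_circle

end CircleAverage

section Polar

lemma lintegral_eq_lintegral_circleMap {g : ℂ → ℝ≥0∞} (hg : Measurable g) (c : ℂ) :
    ∫⁻ z, g z =
      ∫⁻ r in Ioi (0 : ℝ), ENNReal.ofReal r * ∫⁻ θ in Ioo (-π) π, g (circleMap c r θ) := by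
  have polarCoord_symm_eq (p : ℝ × ℝ) : c + Complex.polarCoord.symm p = circleMap c p.1 p.2 := by
    rw [Complex.polarCoord_symm_apply, circleMap, Complex.exp_mul_I, Complex.ofReal_cos,
      Complex.ofReal_sin]
  rw [← lintegral_add_left_eq_self g c, ← Complex.lintegral_comp_polarCoord_symm]
  simp only [polarCoord_symm_eq, smul_eq_mul]
  rw [polarCoord_target, Measure.volume_eq_prod, setLIntegral_prod]
  · exact setLIntegral_congr_fun measurableSet_Ioi fun r _ ↦
      lintegral_const_mul (ENNReal.ofReal r) (hg.comp (continuous_circleMap c r).measurable)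
  · unfold circleMap
    fun_prop

lemma lintegral_ball_mul_radial {u : ℂ → ℝ} {φ : ℝ → ℝ≥0∞} {c : ℂ} {R : ℝ} (hu₀ : ∀ z, 0 ≤ u z)
    (hu : ContinuousOn u (ball c R)) (hφ : Measurable φ) :
    ∫⁻ z in ball c R, ENNReal.ofReal (u z) * φ ‖z - c‖ =
      ∫⁻ r in Ioo 0 R, ENNReal.ofReal (2 * π * r * Real.circleAverage u c r) * φ r := by
  set v : ℂ → ℝ := (ball c R).indicator u with hv
  have v_measurable : Measurable v := by
    classical
    rw [hv, ← piecewise_eq_indicator]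
    exact hu.measurable_piecewise continuousOn_const measurableSet_ball
  have indicator_eq : ((ball c R).indicator fun z ↦ ENNReal.ofReal (u z) * φ ‖z - c‖) =
      fun z ↦ ENNReal.ofReal (v z) * φ ‖z - c‖ := by
    ext z
    by_cases hz : z ∈ ball c R <;> simp [hv, hz]
  have circle_mem {r : ℝ} (hr : 0 < r) (θ : ℝ) : circleMap c r θ ∈ ball c R ↔ r < R := by
    rw [mem_ball, dist_eq_norm, circleMap_sub_center, norm_circleMap_zero, abs_of_pos hr]
  have Ioo_eq : Ioo 0 R = Iio R ∩ Ioi 0 := by rw [inter_comm, Ioi_inter_Iio]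
  rw [← lintegral_indicator measurableSet_ball, indicator_eq,
    lintegral_eq_lintegral_circleMap (by fun_prop) c, Ioo_eq,
    ← Measure.restrict_restrict measurableSet_Iio, ← lintegral_indicator measurableSet_Iio]
  refine setLIntegral_congr_fun measurableSet_Ioi fun r (hr : 0 < r) ↦ ?_
  by_cases hrR : r < R
  · have circle_integrable : CircleIntegrable u c r :=
      (hu.mono (sphere_subset_closedBall.trans (closedBall_subset_ball hrR))).circleIntegrable hr.le
    have circle_measurable : Measurable fun θ ↦ ENNReal.ofReal (v (circleMap c r θ)) :=
      (v_measurable.comp (measurable_circleMap c r)).ennreal_ofReal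
    rw [indicator_of_mem (mem_Iio.2 hrR)]
    simp only [circleMap_sub_center, norm_circleMap_zero, abs_of_pos hr]
    rw [lintegral_mul_const _ circle_measurable]
    simp only [hv, indicator_of_mem ((circle_mem hr _).2 hrR)]
    rw [lintegral_circleMap_eq_circleAverage hu₀ circle_integrable, ← mul_assoc,
      ← ENNReal.ofReal_mul hr.le]
    ring_nf
  · simp [hv, indicator, circle_mem hr, hrR]

lemma ofReal_mul_norm_le_lintegral_ball {E : Type*} [NormedAddCommGroup E] [NormedSpace ℂ E]
    [CompleteSpace E] {F : ℂ → E} {c : ℂ} {R : ℝ} (hR : 0 ≤ R)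
    (hF : DifferentiableOn ℂ F (ball c R)) :
    ENNReal.ofReal (π * R ^ 2 * ‖F c‖) ≤ ∫⁻ z in ball c R, ENNReal.ofReal ‖F z‖ := by
  have submean {r : ℝ} (hr : r ∈ Ioo 0 R) : ‖F c‖ ≤ Real.circleAverage (fun z ↦ ‖F z‖) c r := by
    refine norm_le_circleAverage_norm (DifferentiableOn.diffContOnCl (hF.mono ?_))
    rw [abs_of_pos hr.1]
    exact closure_ball_subset_closedBall.trans (closedBall_subset_ball hr.2)
  have integral_radius : ∫ r in Ioo 0 R, 2 * π * r * ‖F c‖ = π * R ^ 2 * ‖F c‖ := by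
    rw [← integral_Ioc_eq_integral_Ioo, ← intervalIntegral.integral_of_le hR,
      intervalIntegral.integral_mul_const, intervalIntegral.integral_const_mul, integral_id]
    ring
  calc ENNReal.ofReal (π * R ^ 2 * ‖F c‖)
      = ∫⁻ r in Ioo 0 R, ENNReal.ofReal (2 * π * r * ‖F c‖) := by
        rw [← integral_radius, ofReal_integral_eq_lintegral_ofReal]
        · exact (Continuous.integrableOn_Icc (by fun_prop)).mono_set Ioo_subset_Icc_self
        · refine (ae_restrict_mem measurableSet_Ioo).mono fun r hr ↦ ?_
          have := hr.1
          positivity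
    _ ≤ ∫⁻ r in Ioo 0 R,
          ENNReal.ofReal (2 * π * r * Real.circleAverage (fun z ↦ ‖F z‖) c r) * 1 := by
        refine setLIntegral_mono' measurableSet_Ioo fun r hr ↦ ?_
        have := hr.1
        rw [mul_one]
        gcongr
        exact submean hr
    _ = ∫⁻ z in ball c R, ENNReal.ofReal ‖F z‖ := by
        rw [← lintegral_ball_mul_radial (fun z ↦ norm_nonneg _) hF.continuousOn.norm
          measurable_const]
        simp only [mul_one]

end Polar

section Green

/-- The Green function `g(z, a) = log |(1 - ā z) / (z - a)|` of the unit disc with pole at `a`,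
whose powers are the weights in the definition of `Q_s`; as a real number it is `0` at the pole. -/
def green (a z : ℂ) : ℝ := Real.log ‖(1 - conj a * z) / (z - a)‖

variable {a z : ℂ}

lemma norm_one_sub_conj_mul_sq (a z : ℂ) :
    ‖1 - conj a * z‖ ^ 2 = ‖z - a‖ ^ 2 + (1 - ‖a‖ ^ 2) * (1 - ‖z‖ ^ 2) := by
  simp only [Complex.sq_norm, Complex.normSq_apply, Complex.sub_re, Complex.sub_im, Complex.mul_re,
    Complex.mul_im, Complex.conj_re, Complex.conj_im, Complex.one_re, Complex.one_im]
  ring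

lemma one_sub_sq_le_two_mul (x : ℝ) : 1 - x ^ 2 ≤ 2 * (1 - x) := by
  nlinarith [sq_nonneg (1 - x)]

lemma one_sub_norm_sq_mul_le (ha : ‖a‖ < 1) (hz : ‖z‖ < 1) :
    (1 - ‖a‖ ^ 2) * (1 - ‖z‖ ^ 2) ≤ 2 * (1 - ‖a‖) * (2 * (1 - ‖z‖)) := by
  have : 0 ≤ 1 - ‖z‖ ^ 2 := by nlinarith [norm_nonneg z]
  exact mul_le_mul (one_sub_sq_le_two_mul ‖a‖) (one_sub_sq_le_two_mul ‖z‖) this (by linarith)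

lemma norm_sub_le_norm_one_sub_conj_mul (ha : ‖a‖ < 1) (hz : ‖z‖ < 1) :
    ‖z - a‖ ≤ ‖1 - conj a * z‖ := by
  refine le_of_sq_le_sq ?_ (norm_nonneg _)
  rw [norm_one_sub_conj_mul_sq]
  have ha' : 0 ≤ 1 - ‖a‖ ^ 2 := by nlinarith [norm_nonneg a]
  have hz' : 0 ≤ 1 - ‖z‖ ^ 2 := by nlinarith [norm_nonneg z]
  linarith [mul_nonneg ha' hz']

lemma green_nonneg (ha : ‖a‖ < 1) (hz : ‖z‖ < 1) : 0 ≤ green a z := by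
  rcases eq_or_ne z a with rfl | hza
  · simp [green]
  · refine Real.log_nonneg ?_
    rw [norm_div, one_le_div (norm_pos_iff.2 (sub_ne_zero.2 hza))]
    exact norm_sub_le_norm_one_sub_conj_mul ha hz

lemma green_le_div_sq (ha : ‖a‖ < 1) (hz : ‖z‖ < 1) (hza : z ≠ a) :
    green a z ≤ 2 * ((1 - ‖a‖) * (1 - ‖z‖) / ‖z - a‖ ^ 2) := by
  have dist_pos : 0 < ‖z - a‖ := norm_pos_iff.2 (sub_ne_zero.2 hza)
  set x : ℝ := ‖(1 - conj a * z) / (z - a)‖ with hx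
  have x_pos : 0 < x := by
    rw [hx, norm_div]
    exact div_pos (dist_pos.trans_le (norm_sub_le_norm_one_sub_conj_mul ha hz)) dist_pos
  have x_sq : x ^ 2 - 1 = (1 - ‖a‖ ^ 2) * (1 - ‖z‖ ^ 2) / ‖z - a‖ ^ 2 := by
    rw [hx, norm_div, div_pow, norm_one_sub_conj_mul_sq]
    field_simp
    ring
  calc green a z = Real.log (x ^ 2) / 2 := by rw [Real.log_pow, Nat.cast_ofNat]; unfold green; ring
    _ ≤ (x ^ 2 - 1) / 2 := by gcongr; exact Real.log_le_sub_one_of_pos (by positivity)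
    _ ≤ 2 * (1 - ‖a‖) * (2 * (1 - ‖z‖)) / ‖z - a‖ ^ 2 / 2 := by
        rw [x_sq]
        gcongr ?_ / _ / _
        exact one_sub_norm_sq_mul_le ha hz
    _ = 2 * ((1 - ‖a‖) * (1 - ‖z‖) / ‖z - a‖ ^ 2) := by ring

lemma green_le_min (ha : ‖a‖ < 1) (hz : ‖z‖ < 1) (hza : (1 - ‖a‖) / 2 ≤ ‖z - a‖) :
    green a z ≤ 18 * min ((1 - ‖z‖) / (1 - ‖a‖)) ((1 - ‖a‖) / (1 - ‖z‖)) := by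
  have ρ_pos : 0 < 1 - ‖a‖ := sub_pos.2 ha
  have t_pos : 0 < 1 - ‖z‖ := sub_pos.2 hz
  have dist_pos : 0 < ‖z - a‖ := (half_pos ρ_pos).trans_le hza
  have t_le : 1 - ‖z‖ ≤ 3 * ‖z - a‖ := by
    linarith [norm_sub_norm_le a z, norm_sub_rev a z]
  refine (green_le_div_sq ha hz (sub_ne_zero.1 (norm_pos_iff.1 dist_pos))).trans ?_
  rw [mul_min_of_nonneg _ _ (by norm_num), le_min_iff]
  constructor <;> rw [mul_div_assoc', mul_div_assoc', div_le_div_iff₀ (by positivity) ‹_›]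
  · nlinarith [mul_le_mul hza hza (by positivity) dist_pos.le]
  · nlinarith [mul_le_mul t_le t_le t_pos.le (by positivity)]

lemma log_rpow_le {x s : ℝ} (hs : 0 < s) (hx : 1 ≤ x) : Real.log x ^ s ≤ s ^ s * x := by
  have x_nonneg : 0 ≤ x := zero_le_one.trans hx
  calc Real.log x ^ s ≤ (x ^ (1 / s) / (1 / s)) ^ s :=
        Real.rpow_le_rpow (Real.log_nonneg hx)
          (Real.log_le_rpow_div x_nonneg (one_div_pos.2 hs)) hs.le
    _ = s ^ s * x := by
        rw [div_div_eq_mul_div, div_one, Real.mul_rpow (by positivity) hs.le,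
          ← Real.rpow_mul x_nonneg, one_div_mul_cancel hs.ne', Real.rpow_one, mul_comm]

lemma norm_one_sub_conj_mul_le (ha : ‖a‖ < 1) (hz : ‖z‖ < 1) (hza : ‖z - a‖ ≤ (1 - ‖a‖) / 2) :
    ‖1 - conj a * z‖ ≤ 3 * (1 - ‖a‖) := by
  have t_le : 1 - ‖z‖ ≤ 3 / 2 * (1 - ‖a‖) := by
    linarith [norm_sub_norm_le a z, norm_sub_rev a z]
  refine le_of_sq_le_sq ?_ (by linarith)
  rw [norm_one_sub_conj_mul_sq]
  have dist_sq_le : ‖z - a‖ ^ 2 ≤ ((1 - ‖a‖) / 2) ^ 2 := by gcongr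
  nlinarith [one_sub_norm_sq_mul_le ha hz]

lemma green_rpow_le {s : ℝ} (hs : 0 < s) (ha : ‖a‖ < 1) (hz : ‖z‖ < 1)
    (hza : ‖z - a‖ ≤ (1 - ‖a‖) / 2) :
    green a z ^ s ≤ s ^ s * (3 * (1 - ‖a‖) / ‖z - a‖) := by
  rcases eq_or_ne z a with rfl | hne
  · simp [green, Real.zero_rpow hs.ne']
  have dist_pos : 0 < ‖z - a‖ := norm_pos_iff.2 (sub_ne_zero.2 hne)
  have quotient_ge : 1 ≤ ‖(1 - conj a * z) / (z - a)‖ := by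
    rw [norm_div, one_le_div dist_pos]
    exact norm_sub_le_norm_one_sub_conj_mul ha hz
  refine (log_rpow_le hs quotient_ge).trans ?_
  rw [norm_div]
  gcongr
  exact norm_one_sub_conj_mul_le ha hz hza

lemma one_le_green (hz : ‖z‖ < 1) (hza : ‖z - a‖ ≤ (1 - ‖a‖) / 4) (hne : z ≠ a) :
    1 ≤ green a z := by
  have dist_pos : 0 < ‖z - a‖ := norm_pos_iff.2 (sub_ne_zero.2 hne)
  have numerator_ge : 1 - ‖a‖ ≤ ‖1 - conj a * z‖ := by
    have norm_mul_le : ‖conj a * z‖ ≤ ‖a‖ := by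
      rw [norm_mul, RCLike.norm_conj]
      exact mul_le_of_le_one_right (norm_nonneg a) hz.le
    have := norm_sub_norm_le 1 (conj a * z)
    rw [norm_one] at this
    linarith
  have quotient_ge : 4 ≤ ‖(1 - conj a * z) / (z - a)‖ := by
    rw [norm_div, le_div_iff₀ dist_pos]
    linarith
  rw [green, Real.le_log_iff_exp_le (by linarith)]
  linarith [Real.exp_one_lt_d9]

end Green

section ScaleInvariantIntegral

variable {s ρ : ℝ}

lemma lintegral_Ioc_div_rpow_div (hs : 0 < s) (hρ : 0 < ρ) :
    ∫⁻ t in Ioc 0 ρ, ENNReal.ofReal ((t / ρ) ^ s / t) = ENNReal.ofReal (1 / s) := by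
  have integral_eq : ∫ t in Ioc 0 ρ, ρ ^ (-s) * t ^ (s - 1) = 1 / s := by
    rw [← intervalIntegral.integral_of_le hρ.le, intervalIntegral.integral_const_mul,
      integral_rpow (.inl (by linarith)), sub_add_cancel, Real.zero_rpow hs.ne', sub_zero,
      ← mul_div_assoc, ← Real.rpow_add hρ, neg_add_cancel, Real.rpow_zero]
  have integrand_eq : ∀ t ∈ Ioc 0 ρ,
      ENNReal.ofReal ((t / ρ) ^ s / t) = ENNReal.ofReal (ρ ^ (-s) * t ^ (s - 1)) := fun t ht ↦ by
    rw [Real.div_rpow ht.1.le hρ.le, Real.rpow_neg hρ.le, Real.rpow_sub_one ht.1.ne']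
    ring_nf
  rw [setLIntegral_congr_fun measurableSet_Ioc integrand_eq, ← integral_eq,
    ofReal_integral_eq_lintegral_ofReal]
  · exact (intervalIntegrable_iff_integrableOn_Ioc_of_le hρ.le).1
      ((intervalIntegral.intervalIntegrable_rpow' (by linarith)).const_mul _)
  · refine (ae_restrict_mem measurableSet_Ioc).mono fun t ht ↦ ?_
    have := ht.1
    positivity

lemma lintegral_Ioi_div_rpow_div (hs : 0 < s) (hρ : 0 < ρ) :
    ∫⁻ t in Ioi ρ, ENNReal.ofReal ((ρ / t) ^ s / t) = ENNReal.ofReal (1 / s) := by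
  have integral_eq : ∫ t in Ioi ρ, ρ ^ s * t ^ (-s - 1) = 1 / s := by
    rw [integral_const_mul, integral_Ioi_rpow_of_lt (by linarith) hρ, sub_add_cancel,
      neg_div_neg_eq, ← mul_div_assoc, ← Real.rpow_add hρ, add_neg_cancel, Real.rpow_zero]
  have integrand_eq : ∀ t ∈ Ioi ρ,
      ENNReal.ofReal ((ρ / t) ^ s / t) = ENNReal.ofReal (ρ ^ s * t ^ (-s - 1)) := fun t ht ↦ by
    have t_pos : 0 < t := hρ.trans ht
    rw [Real.div_rpow hρ.le t_pos.le, Real.rpow_sub_one t_pos.ne', Real.rpow_neg t_pos.le]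
    ring_nf
  rw [setLIntegral_congr_fun measurableSet_Ioi integrand_eq, ← integral_eq,
    ofReal_integral_eq_lintegral_ofReal]
  · exact (integrableOn_Ioi_rpow_of_lt (by linarith) hρ).const_mul _
  · refine (ae_restrict_mem measurableSet_Ioi).mono fun t ht ↦ ?_
    have : 0 < t := hρ.trans ht
    positivity

lemma lintegral_Ioi_min_rpow_div (hs : 0 < s) (hρ : 0 < ρ) :
    ∫⁻ t in Ioi 0, ENNReal.ofReal (min (t / ρ) (ρ / t) ^ s / t) = ENNReal.ofReal (2 / s) := by
  have min_eq_left_of_mem : ∀ t ∈ Ioc 0 ρ, min (t / ρ) (ρ / t) = t / ρ := fun t ht ↦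
    min_eq_left (((div_le_one hρ).2 ht.2).trans ((one_le_div ht.1).2 ht.2))
  have min_eq_right_of_mem : ∀ t ∈ Ioi ρ, min (t / ρ) (ρ / t) = ρ / t := fun t ht ↦
    min_eq_right (((div_le_one (hρ.trans ht)).2 ht.le).trans ((one_le_div hρ).2 ht.le))
  rw [← Ioc_union_Ioi_eq_Ioi hρ.le, lintegral_union measurableSet_Ioi (Ioc_disjoint_Ioi le_rfl),
    setLIntegral_congr_fun measurableSet_Ioc fun t ht ↦ by rw [min_eq_left_of_mem t ht],
    setLIntegral_congr_fun measurableSet_Ioi fun t ht ↦ by rw [min_eq_right_of_mem t ht],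
    lintegral_Ioc_div_rpow_div hs hρ, lintegral_Ioi_div_rpow_div hs hρ,
    ← ENNReal.ofReal_add (by positivity) (by positivity)]
  ring_nf

end ScaleInvariantIntegral

section RadialEstimates

lemma lintegral_ball_inv_norm_sub (c : ℂ) (R : ℝ) :
    ∫⁻ z in ball c R, ENNReal.ofReal ‖z - c‖⁻¹ = ENNReal.ofReal (2 * π * R) := by
  have radial := lintegral_ball_mul_radial (u := fun _ ↦ 1) (φ := fun r ↦ ENNReal.ofReal r⁻¹)
    (c := c) (R := R) (fun _ ↦ zero_le_one) continuousOn_const (by fun_prop)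
  have integrand_eq : ∀ r ∈ Ioo 0 R, ENNReal.ofReal (2 * π * r * Real.circleAverage (fun _ ↦ 1) c r)
      * ENNReal.ofReal r⁻¹ = ENNReal.ofReal (2 * π) := fun r hr ↦ by
    rw [Real.circleAverage_const, mul_one, ← ENNReal.ofReal_mul' (inv_nonneg.2 hr.1.le),
      mul_inv_cancel_right₀ hr.1.ne']
  simp only [ENNReal.ofReal_one, one_mul] at radial
  rw [radial, setLIntegral_congr_fun measurableSet_Ioo integrand_eq, setLIntegral_const,
    Real.volume_Ioo, sub_zero, ENNReal.ofReal_mul Real.two_pi_pos.le]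

variable {u : ℂ → ℝ} {K : ℝ}

lemma two_pi_mul_circleAverage_le (hu₀ : ∀ z, 0 ≤ u z) {r : ℝ} (hr : r ∈ Ioo 0 1)
    (hK : (1 - r) * Real.circleAverage u 0 r ≤ K) :
    2 * π * r * Real.circleAverage u 0 r ≤ 2 * π * (K / (1 - r)) := by
  rw [mul_assoc]
  gcongr
  refine (mul_le_of_le_one_left (Real.circleAverage_nonneg_of_nonneg fun z _ ↦ hu₀ z)
    hr.2.le).trans ?_
  rwa [le_div_iff₀' (sub_pos.2 hr.2)]

lemma lintegral_ball_half_le_of_circleAverage_le (hu₀ : ∀ z, 0 ≤ u z)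
    (hu : ContinuousOn u (ball 0 1))
    (hK : ∀ r ∈ Ico (0 : ℝ) 1, (1 - r) * Real.circleAverage u 0 r ≤ K) {w : ℂ} (hw : ‖w‖ < 1) :
    ∫⁻ z in ball w ((1 - ‖w‖) / 2), ENNReal.ofReal (u z) ≤ ENNReal.ofReal (4 * π * K) := by
  set R : ℝ := (1 - ‖w‖) / 2 with hR
  have R_pos : 0 < R := by linarith
  -- the ball lies in the annulus `‖z‖ ∈ I`, whose width is comparable to its distance to the circle
  set I : Set ℝ := Ioo (‖w‖ - R) (‖w‖ + R)
  have norm_mem {z : ℂ} (hz : z ∈ ball w R) : ‖z‖ ∈ I := by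
    have := abs_lt.1 ((abs_norm_sub_norm_le z w).trans_lt (mem_ball_iff_norm.1 hz))
    constructor <;> linarith
  have ball_subset : ball w R ⊆ ball 0 1 := fun z hz ↦
    mem_ball_zero_iff.2 ((norm_mem hz).2.trans (by linarith))
  have circle_le {r : ℝ} (hr : r ∈ Ioo 0 1) (hrI : r ∈ I) :
      2 * π * r * Real.circleAverage u 0 r ≤ 2 * π * (K / R) := by
    have hKr := hK r ⟨hr.1.le, hr.2⟩
    have K_nonneg : 0 ≤ K := (mul_nonneg (sub_nonneg.2 hr.2.le)
      (Real.circleAverage_nonneg_of_nonneg fun z _ ↦ hu₀ z)).trans hKr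
    refine (two_pi_mul_circleAverage_le hu₀ hr hKr).trans ?_
    gcongr
    linarith [hrI.2]
  calc ∫⁻ z in ball w R, ENNReal.ofReal (u z)
      = ∫⁻ z in ball w R, ENNReal.ofReal (u z) * I.indicator 1 ‖z - 0‖ :=
        setLIntegral_congr_fun measurableSet_ball fun z hz ↦ by
          rw [sub_zero, indicator_of_mem (norm_mem hz), Pi.one_apply, mul_one]
    _ ≤ ∫⁻ z in ball 0 1, ENNReal.ofReal (u z) * I.indicator 1 ‖z - 0‖ :=
        lintegral_mono_set ball_subset
    _ = ∫⁻ r in Ioo 0 1,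
          ENNReal.ofReal (2 * π * r * Real.circleAverage u 0 r) * I.indicator 1 r :=
        lintegral_ball_mul_radial hu₀ hu (measurable_one.indicator measurableSet_Ioo)
    _ ≤ ∫⁻ r in Ioo 0 1, I.indicator (fun _ ↦ ENNReal.ofReal (2 * π * (K / R))) r := by
        refine setLIntegral_mono' measurableSet_Ioo fun r hr ↦ ?_
        by_cases hrI : r ∈ I
        · simpa [hrI] using ENNReal.ofReal_le_ofReal (circle_le hr hrI)
        · simp [hrI]
    _ ≤ ENNReal.ofReal (2 * π * (K / R)) * volume I := by
        rw [← lintegral_indicator_const measurableSet_Ioo]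
        exact setLIntegral_le_lintegral _ _
    _ = ENNReal.ofReal (4 * π * K) := by
        rw [Real.volume_Ioo, ← ENNReal.ofReal_mul' (by linarith)]
        congr 1
        field_simp
        ring

lemma lintegral_ball_mul_min_rpow_le {s ρ : ℝ} (hs : 0 < s) (hρ : 0 < ρ) (hu₀ : ∀ z, 0 ≤ u z)
    (hu : ContinuousOn u (ball 0 1))
    (hK : ∀ r ∈ Ico (0 : ℝ) 1, (1 - r) * Real.circleAverage u 0 r ≤ K) :
    ∫⁻ z in ball 0 1, ENNReal.ofReal (u z) *
        ENNReal.ofReal (min ((1 - ‖z‖) / ρ) (ρ / (1 - ‖z‖)) ^ s) ≤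
      ENNReal.ofReal (4 * π * K / s) := by
  set weight : ℝ → ℝ := fun t ↦ min (t / ρ) (ρ / t) ^ s
  have weight_nonneg {t : ℝ} (ht : 0 < t) : 0 ≤ weight t := by positivity
  calc ∫⁻ z in ball 0 1, ENNReal.ofReal (u z) * ENNReal.ofReal (weight (1 - ‖z‖))
      = ∫⁻ r in Ioo 0 1, ENNReal.ofReal (2 * π * r * Real.circleAverage u 0 r) *
          ENNReal.ofReal (weight (1 - r)) := by
        simpa only [sub_zero] using lintegral_ball_mul_radial (R := 1) hu₀ hu
          (φ := fun r ↦ ENNReal.ofReal (weight (1 - r))) (by fun_prop)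
    _ ≤ ∫⁻ r in Ioo 0 1,
          ENNReal.ofReal (2 * π * K) * ENNReal.ofReal (weight (1 - r) / (1 - r)) := by
        refine setLIntegral_mono' measurableSet_Ioo fun r hr ↦ ?_
        have t_pos : 0 < 1 - r := sub_pos.2 hr.2
        rw [← ENNReal.ofReal_mul' (weight_nonneg t_pos),
          ← ENNReal.ofReal_mul' (div_nonneg (weight_nonneg t_pos) t_pos.le), ← mul_div_assoc,
          mul_div_right_comm, mul_div_assoc]
        gcongr ENNReal.ofReal (?_ * _)
        exact two_pi_mul_circleAverage_le hu₀ hr (hK r ⟨hr.1.le, hr.2⟩)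
    _ ≤ ∫⁻ r in (1 - ·) ⁻¹' Ioi 0,
          ENNReal.ofReal (2 * π * K) * ENNReal.ofReal (weight (1 - r) / (1 - r)) :=
        lintegral_mono_set fun r hr ↦ sub_pos.2 hr.2
    _ = ∫⁻ t in Ioi 0, ENNReal.ofReal (2 * π * K) * ENNReal.ofReal (weight t / t) :=
        (volume.measurePreserving_sub_left (1 : ℝ)).setLIntegral_comp_preimage measurableSet_Ioi
          (f := fun t ↦ ENNReal.ofReal (2 * π * K) * ENNReal.ofReal (weight t / t)) (by fun_prop)
    _ = ENNReal.ofReal (4 * π * K / s) := by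
        rw [lintegral_const_mul _ (by fun_prop), lintegral_Ioi_min_rpow_div hs hρ,
          ← ENNReal.ofReal_mul' (by positivity)]
        ring_nf

end RadialEstimates

section FunctionSpaces

variable {f : ℂ → ℂ} {s : ℝ}

lemma continuousOn_norm_deriv_sq (hf : DifferentiableOn ℂ f (ball 0 1)) :
    ContinuousOn (fun z ↦ ‖deriv f z‖ ^ 2) (ball 0 1) :=
  (hf.deriv isOpen_ball).continuousOn.norm.pow 2

lemma M2_eq_sqrt_circleAverage (g : ℂ → ℂ) (r : ℝ) :
    M2 g r = √(Real.circleAverage (fun z ↦ ‖g z‖ ^ 2) 0 r) := by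
  simp only [M2, Real.circleAverage_def, circleMap_zero, smul_eq_mul]

lemma memLambda_iff_circleAverage_le : MemLambda f ↔ DifferentiableOn ℂ f (ball 0 1) ∧
    ∃ K ≥ 0, ∀ r ∈ Ico (0 : ℝ) 1,
      (1 - r) * Real.circleAverage (fun z ↦ ‖deriv f z‖ ^ 2) 0 r ≤ K := by
  have sqrt_mul_M2 {r : ℝ} (hr : r ∈ Ico (0 : ℝ) 1) : √(1 - r) * M2 (deriv f) r =
      √((1 - r) * Real.circleAverage (fun z ↦ ‖deriv f z‖ ^ 2) 0 r) := by
    rw [M2_eq_sqrt_circleAverage, Real.sqrt_mul (sub_nonneg.2 hr.2.le)]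
  refine and_congr_right fun _ ↦ ⟨fun ⟨C, hC⟩ ↦ ⟨C ^ 2, sq_nonneg C, fun r hr ↦ ?_⟩,
    fun ⟨K, _, hK⟩ ↦ ⟨√K, fun r hr ↦ ?_⟩⟩
  · exact (Real.sqrt_le_iff.1 (sqrt_mul_M2 hr ▸ hC r hr)).2
  · exact sqrt_mul_M2 hr ▸ Real.sqrt_le_sqrt (hK r hr)

lemma memBloch_iff_one_sub_norm_mul_le : MemBloch f ↔ DifferentiableOn ℂ f (ball 0 1) ∧
    ∃ M, ∀ z ∈ ball (0 : ℂ) 1, (1 - ‖z‖) * ‖deriv f z‖ ≤ M := by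
  refine and_congr_right fun _ ↦ ⟨fun ⟨M, hM⟩ ↦ ⟨M, fun z hz ↦ le_trans ?_ (hM z hz)⟩,
    fun ⟨M, hM⟩ ↦ ⟨2 * M, fun z hz ↦ ?_⟩⟩
  · gcongr
    exact pow_le_of_le_one (norm_nonneg z) (mem_ball_zero_iff.1 hz).le two_ne_zero
  · calc (1 - ‖z‖ ^ 2) * ‖deriv f z‖ ≤ 2 * (1 - ‖z‖) * ‖deriv f z‖ := by
          gcongr
          exact one_sub_sq_le_two_mul ‖z‖
      _ ≤ 2 * M := by linarith [hM z hz]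

lemma ofReal_sq_mul_norm_deriv_le_lintegral_ball {w : ℂ} {R : ℝ} (hR : 0 ≤ R)
    (hf : DifferentiableOn ℂ f (ball w R)) :
    ENNReal.ofReal (π * (R * ‖deriv f w‖) ^ 2) ≤
      ∫⁻ z in ball w R, ENNReal.ofReal (‖deriv f z‖ ^ 2) := by
  have submean := ofReal_mul_norm_le_lintegral_ball hR ((hf.deriv isOpen_ball).pow 2)
  simpa only [Pi.pow_apply, norm_pow, mul_pow, mul_assoc] using submean

lemma ball_subset_unit_ball {w : ℂ} {R : ℝ} (hR : R ≤ 1 - ‖w‖) : ball w R ⊆ ball 0 1 :=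
  ball_subset_ball' (by rw [dist_zero_right]; linarith)

lemma ofReal_sq_le_qsInt (hs : 0 ≤ s) (hf : DifferentiableOn ℂ f (ball 0 1)) {w : ℂ}
    (hw : ‖w‖ < 1) :
    ENNReal.ofReal (((1 - ‖w‖) / 4 * ‖deriv f w‖) ^ 2) ≤ qsInt s f w := by
  set R : ℝ := (1 - ‖w‖) / 4 with hR
  have ball_subset : ball w R ⊆ ball 0 1 := ball_subset_unit_ball (by linarith)
  -- only almost everywhere, because `green w w = 0`
  have integrand_le : ∀ᵐ z, z ∈ ball w R → ENNReal.ofReal (‖deriv f z‖ ^ 2) ≤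
      ENNReal.ofReal (‖deriv f z‖ ^ 2 * green w z ^ s) := by
    filter_upwards [Measure.ae_ne volume w] with z hne hz
    refine ENNReal.ofReal_le_ofReal (le_mul_of_one_le_right (sq_nonneg _) ?_)
    exact Real.one_le_rpow (one_le_green (mem_ball_zero_iff.1 (ball_subset hz))
      (mem_ball_iff_norm.1 hz).le hne) hs
  calc ENNReal.ofReal ((R * ‖deriv f w‖) ^ 2)
      = (ENNReal.ofReal π)⁻¹ * ENNReal.ofReal (π * (R * ‖deriv f w‖) ^ 2) := by
        rw [ENNReal.ofReal_mul Real.pi_pos.le, ENNReal.inv_mul_cancel_left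
          (ENNReal.ofReal_pos.2 Real.pi_pos).ne' ENNReal.ofReal_ne_top]
    _ ≤ (ENNReal.ofReal π)⁻¹ * ∫⁻ z in ball w R, ENNReal.ofReal (‖deriv f z‖ ^ 2) := by
        gcongr
        exact ofReal_sq_mul_norm_deriv_le_lintegral_ball (by linarith) (hf.mono ball_subset)
    _ ≤ (ENNReal.ofReal π)⁻¹ *
          ∫⁻ z in ball w R, ENNReal.ofReal (‖deriv f z‖ ^ 2 * green w z ^ s) := by
        gcongr 1
        exact setLIntegral_mono_ae' measurableSet_ball integrand_le
    _ ≤ qsInt s f w := by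
        unfold qsInt
        gcongr 1
        exact lintegral_mono_set ball_subset

theorem MemQs.memBloch (hs : 0 ≤ s) (h : MemQs s f) : MemBloch f := by
  obtain ⟨hf, hsup⟩ := h
  set B : ℝ≥0∞ := ⨆ a ∈ ball (0 : ℂ) 1, qsInt s f a
  refine memBloch_iff_one_sub_norm_mul_le.2 ⟨hf, 4 * √B.toReal, fun w hw ↦ ?_⟩
  have le_sup : ENNReal.ofReal (((1 - ‖w‖) / 4 * ‖deriv f w‖) ^ 2) ≤ B :=
    (ofReal_sq_le_qsInt hs hf (mem_ball_zero_iff.1 hw)).trans (le_iSup₂_of_le w hw le_rfl)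
  have := Real.le_sqrt_of_sq_le ((ENNReal.ofReal_le_iff_le_toReal hsup.ne).1 le_sup)
  linarith

theorem MemLambda.memBloch (h : MemLambda f) : MemBloch f := by
  obtain ⟨hf, K, hK₀, hK⟩ := memLambda_iff_circleAverage_le.1 h
  refine memBloch_iff_one_sub_norm_mul_le.2 ⟨hf, 2 * √(4 * K), fun w hw ↦ ?_⟩
  have hw' : ‖w‖ < 1 := mem_ball_zero_iff.1 hw
  have lower := ofReal_sq_mul_norm_deriv_le_lintegral_ball (R := (1 - ‖w‖) / 2) (by linarith)
    (hf.mono (ball_subset_unit_ball (w := w) (by linarith)))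
  have upper := lintegral_ball_half_le_of_circleAverage_le (fun z ↦ sq_nonneg _)
    (continuousOn_norm_deriv_sq hf) hK hw'
  have sq_le := (ENNReal.ofReal_le_ofReal_iff (by positivity)).1 (lower.trans upper)
  rw [mul_comm 4 π, mul_assoc, mul_le_mul_iff_right₀ Real.pi_pos] at sq_le
  linarith [Real.le_sqrt_of_sq_le sq_le]

lemma setLIntegral_green_far_le (hs : 0 < s) (hf : DifferentiableOn ℂ f (ball 0 1)) {K : ℝ}
    (hK : ∀ r ∈ Ico (0 : ℝ) 1, (1 - r) * Real.circleAverage (fun z ↦ ‖deriv f z‖ ^ 2) 0 r ≤ K)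
    {a : ℂ} (ha : ‖a‖ < 1) :
    ∫⁻ z in ball 0 1 \ ball a ((1 - ‖a‖) / 2), ENNReal.ofReal (‖deriv f z‖ ^ 2 * green a z ^ s) ≤
      ENNReal.ofReal (18 ^ s) * ENNReal.ofReal (4 * π * K / s) := by
  set weight : ℂ → ℝ := fun z ↦ min ((1 - ‖z‖) / (1 - ‖a‖)) ((1 - ‖a‖) / (1 - ‖z‖)) ^ s
  have integrand_le : ∀ z ∈ ball 0 1 \ ball a ((1 - ‖a‖) / 2),
      ENNReal.ofReal (‖deriv f z‖ ^ 2 * green a z ^ s) ≤ ENNReal.ofReal (18 ^ s) *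
        (ENNReal.ofReal (‖deriv f z‖ ^ 2) * ENNReal.ofReal (weight z)) := by
    intro z ⟨hz, hza⟩
    rw [mem_ball_zero_iff] at hz
    rw [mem_ball_iff_norm, not_lt] at hza
    have quotient_nonneg : 0 ≤ min ((1 - ‖z‖) / (1 - ‖a‖)) ((1 - ‖a‖) / (1 - ‖z‖)) :=
      le_min (div_nonneg (sub_nonneg.2 hz.le) (sub_nonneg.2 ha.le))
        (div_nonneg (sub_nonneg.2 ha.le) (sub_nonneg.2 hz.le))
    rw [← ENNReal.ofReal_mul (by positivity), ← ENNReal.ofReal_mul (by positivity),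
      mul_left_comm, ← Real.mul_rpow (by norm_num) quotient_nonneg]
    gcongr
    · exact green_nonneg ha hz
    · exact green_le_min ha hz hza
  calc _ ≤ ∫⁻ z in ball 0 1 \ ball a ((1 - ‖a‖) / 2), ENNReal.ofReal (18 ^ s) *
          (ENNReal.ofReal (‖deriv f z‖ ^ 2) * ENNReal.ofReal (weight z)) :=
        setLIntegral_mono' (measurableSet_ball.diff measurableSet_ball) integrand_le
    _ ≤ ∫⁻ z in ball 0 1, ENNReal.ofReal (18 ^ s) *
          (ENNReal.ofReal (‖deriv f z‖ ^ 2) * ENNReal.ofReal (weight z)) :=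
        lintegral_mono_set sdiff_subset
    _ ≤ ENNReal.ofReal (18 ^ s) * ENNReal.ofReal (4 * π * K / s) := by
        rw [lintegral_const_mul' _ _ ENNReal.ofReal_ne_top]
        gcongr
        exact lintegral_ball_mul_min_rpow_le hs (sub_pos.2 ha) (fun z ↦ sq_nonneg _)
          (continuousOn_norm_deriv_sq hf) hK

lemma setLIntegral_green_near_le (hs : 0 < s) {M : ℝ}
    (hM : ∀ z ∈ ball (0 : ℂ) 1, (1 - ‖z‖) * ‖deriv f z‖ ≤ M) {a : ℂ} (ha : ‖a‖ < 1) :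
    ∫⁻ z in ball a ((1 - ‖a‖) / 2), ENNReal.ofReal (‖deriv f z‖ ^ 2 * green a z ^ s) ≤
      ENNReal.ofReal (12 * π * M ^ 2 * s ^ s) := by
  set ρ : ℝ := 1 - ‖a‖
  have ρ_pos : 0 < ρ := sub_pos.2 ha
  have integrand_le : ∀ z ∈ ball a (ρ / 2), ENNReal.ofReal (‖deriv f z‖ ^ 2 * green a z ^ s) ≤
      ENNReal.ofReal (12 * M ^ 2 * s ^ s / ρ) * ENNReal.ofReal ‖z - a‖⁻¹ := fun z hz ↦ by
    have hz₁ : z ∈ ball 0 1 := ball_subset_unit_ball (by linarith) hz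
    rw [mem_ball_iff_norm] at hz
    have deriv_le : ‖deriv f z‖ ≤ 2 * M / ρ := by
      rw [le_div_iff₀ ρ_pos]
      nlinarith [hM z hz₁, norm_nonneg (deriv f z), norm_sub_norm_le z a]
    rw [← ENNReal.ofReal_mul' (by positivity)]
    refine ENNReal.ofReal_le_ofReal ?_
    calc ‖deriv f z‖ ^ 2 * green a z ^ s
        ≤ (2 * M / ρ) ^ 2 * (s ^ s * (3 * ρ / ‖z - a‖)) := by
          gcongr
          · exact Real.rpow_nonneg (green_nonneg ha (mem_ball_zero_iff.1 hz₁)) s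
          · exact green_rpow_le hs ha (mem_ball_zero_iff.1 hz₁) hz.le
      _ = 12 * M ^ 2 * s ^ s / ρ * ‖z - a‖⁻¹ := by
          field_simp
          ring
  refine (setLIntegral_mono' measurableSet_ball integrand_le).trans_eq ?_
  rw [lintegral_const_mul _ (by fun_prop), lintegral_ball_inv_norm_sub,
    ← ENNReal.ofReal_mul (by positivity)]
  congr 1
  field_simp

lemma qsInt_le (hs : 0 < s) (hf : DifferentiableOn ℂ f (ball 0 1)) {K M : ℝ}
    (hK : ∀ r ∈ Ico (0 : ℝ) 1, (1 - r) * Real.circleAverage (fun z ↦ ‖deriv f z‖ ^ 2) 0 r ≤ K)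
    (hM : ∀ z ∈ ball (0 : ℂ) 1, (1 - ‖z‖) * ‖deriv f z‖ ≤ M) {a : ℂ} (ha : ‖a‖ < 1) :
    qsInt s f a ≤ (ENNReal.ofReal π)⁻¹ * (ENNReal.ofReal (18 ^ s) *
      ENNReal.ofReal (4 * π * K / s) + ENNReal.ofReal (12 * π * M ^ 2 * s ^ s)) := by
  unfold qsInt
  gcongr 1
  calc _ ≤ ∫⁻ z in (ball 0 1 \ ball a ((1 - ‖a‖) / 2)) ∪ ball a ((1 - ‖a‖) / 2),
          ENNReal.ofReal (‖deriv f z‖ ^ 2 * green a z ^ s) :=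
        lintegral_mono_set (by rw [sdiff_union_self]; exact subset_union_left)
    _ ≤ _ := (lintegral_union_le _ _ _).trans
        (add_le_add (setLIntegral_green_far_le hs hf hK ha) (setLIntegral_green_near_le hs hM ha))

theorem MemLambda.memQs (hs : 0 < s) (h : MemLambda f) : MemQs s f := by
  obtain ⟨hf, K, -, hK⟩ := memLambda_iff_circleAverage_le.1 h
  obtain ⟨-, M, hM⟩ := memBloch_iff_one_sub_norm_mul_le.1 h.memBloch
  have sup_le := iSup₂_le fun a (ha : a ∈ ball (0 : ℂ) 1) ↦
    qsInt_le hs hf hK hM (mem_ball_zero_iff.1 ha)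
  refine ⟨hf, sup_le.trans_lt (ENNReal.mul_lt_top ?_ (ENNReal.add_lt_top.2
    ⟨ENNReal.mul_lt_top ENNReal.ofReal_lt_top ENNReal.ofReal_lt_top, ENNReal.ofReal_lt_top⟩))⟩
  exact ENNReal.inv_lt_top.2 (ENNReal.ofReal_pos.2 Real.pi_pos)

end FunctionSpaces

section PowerSeries

variable {c : ℕ → ℂ} {f : ℂ → ℂ}

lemma summable_mul_pow_of_norm_le {C : ℝ} (hc : ∀ n, ‖c n‖ ≤ C) {z : ℂ} (hz : ‖z‖ < 1) :
    Summable fun n ↦ c n * z ^ n := by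
  refine .of_norm_bounded ((summable_geometric_of_lt_one (norm_nonneg z) hz).mul_left C) fun n ↦ ?_
  rw [norm_mul, norm_pow]
  gcongr
  exact hc n

lemma summable_norm_mul_pow_of_hasSum {R r : ℝ}
    (hf : ∀ z ∈ ball (0 : ℂ) R, HasSum (fun n ↦ c n * z ^ n) (f z)) (hr : r ∈ Ico 0 R) :
    Summable fun n ↦ ‖c n‖ * r ^ n := by
  simpa [abs_of_nonneg hr.1] using (hf r (by simpa [abs_of_nonneg hr.1] using hr.2)).summable.norm

lemma differentiableOn_and_hasSum_deriv {R : ℝ}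
    (hf : ∀ z ∈ ball (0 : ℂ) R, HasSum (fun n ↦ c n * z ^ n) (f z)) :
    DifferentiableOn ℂ f (ball 0 R) ∧
      ∀ z ∈ ball (0 : ℂ) R, HasSum (fun n : ℕ ↦ (n + 1) * c (n + 1) * z ^ n) (deriv f z) := by
  suffices ∀ z ∈ ball (0 : ℂ) R, DifferentiableAt ℂ f z ∧
      HasSum (fun n : ℕ ↦ (n + 1) * c (n + 1) * z ^ n) (deriv f z) from
    ⟨fun z hz ↦ (this z hz).1.differentiableWithinAt, fun z hz ↦ (this z hz).2⟩
  intro z hz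
  obtain ⟨ρ, hzρ, hρR⟩ := exists_between (mem_ball_zero_iff.1 hz)
  have z_mem : z ∈ ball 0 ρ := mem_ball_zero_iff.2 hzρ
  have summable_ρ := summable_norm_mul_pow_of_hasSum hf ⟨(norm_nonneg z).trans hzρ.le, hρR⟩
  have term_differentiable (n : ℕ) : DifferentiableOn ℂ (fun w ↦ c n * w ^ n) (ball 0 ρ) := by
    fun_prop
  have term_le (n : ℕ) (w : ℂ) (hw : w ∈ ball 0 ρ) : ‖c n * w ^ n‖ ≤ ‖c n‖ * ρ ^ n := by
    rw [norm_mul, norm_pow]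
    gcongr
    exact (mem_ball_zero_iff.1 hw).le
  have f_eq : f =ᶠ[nhds z] fun w ↦ ∑' n, c n * w ^ n := by
    filter_upwards [isOpen_ball.mem_nhds hz] with w hw using (hf w hw).tsum_eq.symm
  refine ⟨((Complex.differentiableOn_tsum_of_summable_norm summable_ρ term_differentiable
    isOpen_ball term_le).differentiableAt (isOpen_ball.mem_nhds z_mem)).congr_of_eventuallyEq f_eq,
    ?_⟩
  have deriv_sum := Complex.hasSum_deriv_of_summable_norm summable_ρ term_differentiable
    isOpen_ball term_le z_mem
  rw [← f_eq.deriv_eq, ← hasSum_nat_add_iff' 1] at deriv_sum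
  simpa [mul_comm, mul_left_comm, mul_assoc] using deriv_sum

theorem memLambda_of_norm_coeff_le {C : ℝ}
    (hf : ∀ z ∈ ball (0 : ℂ) 1, HasSum (fun n ↦ c n * z ^ n) (f z))
    (hC : ∀ n : ℕ, n * ‖c n‖ ≤ C) : MemLambda f := by
  obtain ⟨f_differentiable, hasSum_deriv⟩ := differentiableOn_and_hasSum_deriv hf
  refine memLambda_iff_circleAverage_le.2 ⟨f_differentiable, C ^ 2, sq_nonneg C, fun r hr ↦ ?_⟩
  have norm_coeff_le (n : ℕ) : ‖(n + 1) * c (n + 1)‖ ≤ C := by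
    rw [norm_mul, ← Nat.cast_succ, Complex.norm_natCast]
    exact hC (n + 1)
  have parseval := hasSum_sq_norm_circleAverage hr.1
    (summable_norm_mul_pow_of_hasSum hasSum_deriv hr) fun z hz ↦
      hasSum_deriv z (mem_ball_zero_iff.2 ((mem_sphere_zero_iff_norm.1 hz).trans_lt hr.2))
  have term_le (n : ℕ) : (‖(n + 1) * c (n + 1)‖ * r ^ n) ^ 2 ≤ C ^ 2 * r ^ n := by
    rw [mul_pow]
    gcongr
    · exact norm_coeff_le n
    · exact pow_le_of_le_one (pow_nonneg hr.1 n) (pow_le_one₀ hr.1 hr.2.le) two_ne_zero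
  have average_le := hasSum_le term_le parseval ((hasSum_geometric_of_lt_one hr.1 hr.2).mul_left _)
  rwa [← div_eq_mul_inv, le_div_iff₀' (sub_pos.2 hr.2)] at average_le

end PowerSeries

section MonotoneCoefficients

variable {a : ℕ → ℝ} {f : ℂ → ℂ}

lemma sq_div_two_le_sum_range (N : ℕ) : (N : ℝ) ^ 2 / 2 ≤ ∑ n ∈ Finset.range N, (n + 1 : ℝ) := by
  induction N with
  | zero => simp
  | succ N ih =>
    rw [Finset.sum_range_succ]
    push_cast
    linarith

lemma half_le_one_sub_inv_pow {N : ℕ} (hN : 1 ≤ N) : 1 / 2 ≤ (1 - 1 / (2 * N : ℝ)) ^ N := by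
  have one_le : (1 : ℝ) ≤ N := by exact_mod_cast hN
  have bernoulli := one_add_mul_le_pow (a := -(1 / (2 * N : ℝ)))
    (by rw [neg_le_neg_iff, div_le_iff₀ (by positivity)]; linarith) N
  calc (1 / 2 : ℝ) = 1 + N * -(1 / (2 * N : ℝ)) := by field_simp; norm_num
    _ ≤ _ := by rwa [sub_eq_add_neg]

lemma sq_div_two_mul_le_norm_deriv (ha : Antitone a) (ha₀ : ∀ n, 0 ≤ a n)
    (hf : ∀ z ∈ ball (0 : ℂ) 1, HasSum (fun n ↦ (a n : ℂ) * z ^ n) (f z)) {r : ℝ}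
    (hr : r ∈ Ico 0 1) (N : ℕ) :
    (N : ℝ) ^ 2 / 2 * (r ^ N * a N) ≤ ‖deriv f r‖ := by
  have r_mem : (r : ℂ) ∈ ball 0 1 := by simpa [abs_of_nonneg hr.1] using hr.2
  have hasSum_re : HasSum (fun n : ℕ ↦ (n + 1) * a (n + 1) * r ^ n) (deriv f r).re := by
    refine (Complex.hasSum_re ((differentiableOn_and_hasSum_deriv hf).2 r r_mem)).congr_fun
      fun n ↦ ?_
    norm_cast
  calc (N : ℝ) ^ 2 / 2 * (r ^ N * a N)
      ≤ (∑ n ∈ Finset.range N, (n + 1 : ℝ)) * (r ^ N * a N) :=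
        mul_le_mul_of_nonneg_right (sq_div_two_le_sum_range N)
          (mul_nonneg (pow_nonneg hr.1 N) (ha₀ N))
    _ ≤ ∑ n ∈ Finset.range N, (n + 1) * a (n + 1) * r ^ n := by
        rw [Finset.sum_mul]
        refine Finset.sum_le_sum fun n hn ↦ ?_
        have hnN : n < N := Finset.mem_range.1 hn
        rw [mul_assoc, mul_comm (a _)]
        gcongr _ * ?_
        exact mul_le_mul (pow_le_pow_of_le_one hr.1 hr.2.le hnN.le) (ha hnN) (ha₀ N)
          (pow_nonneg hr.1 n)
    _ ≤ (deriv f r).re := sum_le_hasSum _ (fun n _ ↦ mul_nonneg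
        (mul_nonneg (by positivity) (ha₀ _)) (pow_nonneg hr.1 n)) hasSum_re
    _ ≤ ‖deriv f r‖ := Complex.re_le_norm _

theorem MemBloch.exists_mul_coeff_le (h : MemBloch f) (ha : Antitone a) (ha₀ : ∀ n, 0 ≤ a n)
    (hf : ∀ z ∈ ball (0 : ℂ) 1, HasSum (fun n ↦ (a n : ℂ) * z ^ n) (f z)) :
    ∃ C, ∀ n : ℕ, n * a n ≤ C := by
  obtain ⟨-, M, hM⟩ := memBloch_iff_one_sub_norm_mul_le.1 h
  have M_nonneg : 0 ≤ M := (mul_nonneg (by simp) (norm_nonneg _)).trans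
    (hM 0 (mem_ball_self one_pos))
  refine ⟨8 * M, fun N ↦ ?_⟩
  rcases Nat.eq_zero_or_pos N with rfl | hN
  · simpa using M_nonneg
  have one_le : (1 : ℝ) ≤ N := by exact_mod_cast hN
  set r : ℝ := 1 - 1 / (2 * N) with hr
  have inv_le : 1 / (2 * N : ℝ) ≤ 1 := by rw [div_le_one] <;> linarith
  have r_mem : r ∈ Ico 0 1 := ⟨sub_nonneg.2 inv_le, sub_lt_self 1 (by positivity)⟩
  have bloch : 1 / (2 * N) * ‖deriv f r‖ ≤ M := by
    have := hM r (by simpa [abs_of_nonneg r_mem.1] using r_mem.2)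
    rwa [Complex.norm_of_nonneg r_mem.1, hr, _root_.sub_sub_cancel] at this
  calc (N : ℝ) * a N = 8 * (1 / (2 * N) * ((N : ℝ) ^ 2 / 2 * (1 / 2 * a N))) := by
        field_simp
        norm_num
    _ ≤ 8 * (1 / (2 * N) * ((N : ℝ) ^ 2 / 2 * (r ^ N * a N))) := by
        gcongr
        · exact ha₀ N
        · exact half_le_one_sub_inv_pow hN
    _ ≤ 8 * (1 / (2 * N) * ‖deriv f r‖) := by
        gcongr
        exact sq_div_two_mul_le_norm_deriv ha ha₀ hf r_mem N
    _ ≤ 8 * M := by gcongr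

lemma exists_le_div_iff_exists_mul_le :
    (∃ C > 0, ∀ n : ℕ, 1 ≤ n → a n ≤ C / n) ↔ ∃ C, ∀ n : ℕ, n * a n ≤ C := by
  refine ⟨fun ⟨C, hC₀, hC⟩ ↦ ⟨C, fun n ↦ ?_⟩, fun ⟨C, hC⟩ ↦ ⟨C + 1, ?_, fun n hn ↦ ?_⟩⟩
  · rcases Nat.eq_zero_or_pos n with rfl | hn
    · simpa using hC₀.le
    · rw [← le_div_iff₀' (by positivity)]
      exact hC n hn
  · have := hC 0
    simp only [Nat.cast_zero, zero_mul] at this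
    linarith
  · rw [le_div_iff₀' (by positivity)]
    linarith [hC n]

end MonotoneCoefficients

/-- Theorem 3.1: for a decreasing sequence of nonnegative numbers `(a_n)`, the function
`f(z) = ∑ a_n zⁿ` belongs to `Q_s` iff `a_n = O(1/n)`. -/
theorem memQs_iff_of_antitone (s : ℝ) (hs : 0 < s) (a : ℕ → ℝ)
    (hmono : Antitone a) (hnonneg : ∀ n, 0 ≤ a n) (f : ℂ → ℂ)
    (hf : ∀ z ∈ ball (0:ℂ) 1, f z = ∑' n : ℕ, (a n : ℂ) * z ^ n) :
    MemQs s f ↔ ∃ C > 0, ∀ n : ℕ, 1 ≤ n → a n ≤ C / n := by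
  have norm_coeff (n : ℕ) : ‖(a n : ℂ)‖ = a n := Complex.norm_of_nonneg (hnonneg n)
  have hf_sum : ∀ z ∈ ball (0 : ℂ) 1, HasSum (fun n ↦ (a n : ℂ) * z ^ n) (f z) := fun z hz ↦
    hf z hz ▸ (summable_mul_pow_of_norm_le (fun n ↦ (norm_coeff n).trans_le (hmono n.zero_le))
      (mem_ball_zero_iff.1 hz)).hasSum
  rw [exists_le_div_iff_exists_mul_le]
  constructor
  · exact fun h ↦ (h.memBloch hs.le).exists_mul_coeff_le hmono hnonneg hf_sum
  · rintro ⟨C, hC⟩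
    exact (memLambda_of_norm_coeff_le hf_sum (by simpa only [norm_coeff] using hC)).memQs hs

end PaperHankel
end
end

section
/- Let (a_n)_{n≥0} be a decreasing sequence of nonnegative real numbers, and let f(z) = ∑_{n=0}^∞ a_n z^n (which is analytic on the unit disc 𝔻 since (a_n) is bounded). Then f belongs to the mean Lipschitz space Λ²_{1/2} if and only if a_n = O(1/n) as n → ∞. -/
open MeasureTheory Set Metric ENNReal

noncomputable section

namespace PaperHankel

/-!
By Parseval's identity on the circle of radius `r`, `M₂(r, f')² = ∑ ((n + 1) |a (n + 1)| rⁿ)²`.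
A bound `n |a n| ≤ C` therefore makes `M₂(r, f')²` at most `C² ∑ rⁿ = C² / (1 - r)`. Conversely,
keeping only the terms with `n < N` and using monotonicity, `M₂(r, f')² ≥ (N³ / 3) |a N|² r ^ (2N)`.
For `r = 1 - 1 / (4N)`, Bernoulli's inequality gives `r ^ (2N) ≥ 1 / 2`, hence
`(1 - r) M₂(r, f')² ≥ (N |a N|)² / 24`.
-/

section Parseval

theorem hasSum_norm_sq_of_orthonormal {𝕜 E ι : Type*} [RCLike 𝕜] [NormedAddCommGroup E]
    [InnerProductSpace 𝕜 E] {v : ι → E} (hv : Orthonormal 𝕜 v) {c : ι → 𝕜} {x : E}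
    (h : HasSum (fun i ↦ c i • v i) x) : HasSum (fun i ↦ ‖c i‖ ^ 2) (‖x‖ ^ 2) := by
  have finite_parseval (s : Finset ι) : ‖∑ i ∈ s, c i • v i‖ ^ 2 = ∑ i ∈ s, ‖c i‖ ^ 2 := by
    rw [@norm_sq_eq_re_inner 𝕜, hv.inner_sum, map_sum]
    exact Finset.sum_congr rfl fun i _ ↦ by rw [RCLike.conj_mul]; norm_cast
  simpa only [HasSum, finite_parseval] using h.norm.pow 2

variable {T : ℝ} [Fact (0 < T)]

theorem norm_sq_toLp_haarAddCircle (g : C(AddCircle T, ℂ)) :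
    ‖g.toLp 2 AddCircle.haarAddCircle ℂ‖ ^ 2 = ∫ t, ‖g t‖ ^ 2 ∂AddCircle.haarAddCircle := by
  rw [@norm_sq_eq_re_inner ℂ, ContinuousMap.inner_toLp]
  simp_rw [RCLike.mul_conj]
  norm_cast

theorem hasSum_norm_sq_of_hasSum_fourier {ι : Type*} {e : ι → ℤ} (he : Function.Injective e)
    {c : ι → ℂ} {g : C(AddCircle T, ℂ)} (h : HasSum (fun i ↦ c i • fourier (e i)) g) :
    HasSum (fun i ↦ ‖c i‖ ^ 2) (∫ t, ‖g t‖ ^ 2 ∂AddCircle.haarAddCircle) := by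
  rw [← norm_sq_toLp_haarAddCircle]
  refine hasSum_norm_sq_of_orthonormal (orthonormal_fourier.comp e he) ?_
  simpa [Function.comp_def, fourierLp] using
    h.mapL (ContinuousMap.toLp 2 AddCircle.haarAddCircle ℂ)

end Parseval

section CircleMean

local instance fact_two_pi_pos : Fact (0 < 2 * Real.pi) := ⟨Real.two_pi_pos⟩

theorem M2_sq_eq_integral_haarAddCircle {g : ℂ → ℂ} {r : ℝ} {F : AddCircle (2 * Real.pi) → ℂ}
    (hF : ∀ θ : ℝ, F θ = g (r * Complex.exp (θ * Complex.I))) :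
    M2 g r ^ 2 = ∫ t, ‖F t‖ ^ 2 ∂AddCircle.haarAddCircle := by
  rw [M2, Real.sq_sqrt, AddCircle.integral_haarAddCircle,
    ← AddCircle.intervalIntegral_preimage (2 * Real.pi) 0, zero_add, smul_eq_mul]
  · simp_rw [hF]
  · have := intervalIntegral.integral_nonneg (μ := volume) Real.two_pi_pos.le
      fun θ _ ↦ sq_nonneg ‖g (r * Complex.exp (θ * Complex.I))‖
    positivity

theorem hasSum_M2_sq_of_hasSum_pow {c : ℕ → ℂ} {g : ℂ → ℂ} {r : ℝ} (hr : 0 ≤ r)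
    (hg : ∀ z ∈ sphere (0 : ℂ) r, HasSum (fun n ↦ c n * z ^ n) (g z)) :
    HasSum (fun n ↦ (‖c n‖ * r ^ n) ^ 2) (M2 g r ^ 2) := by
  have summable_fourier :
      Summable fun n : ℕ ↦ (c n * (r : ℂ) ^ n) • fourier (T := 2 * Real.pi) n := by
    refine .of_norm ?_
    simpa [norm_smul, fourier_norm] using (hg r (by simp [abs_of_nonneg hr])).summable.norm
  have sum_apply (θ : ℝ) :
      (∑' n : ℕ, (c n * (r : ℂ) ^ n) • fourier (T := 2 * Real.pi) n) θ =
        g (r * Complex.exp (θ * Complex.I)) := by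
    refine (ContinuousMap.hasSum_apply summable_fourier.hasSum (θ : AddCircle _)).unique ?_
    convert hg (r * Complex.exp (θ * Complex.I)) (by simp [abs_of_nonneg hr]) using 2 with n
    have hπ : (Real.pi : ℂ) ≠ 0 := mod_cast Real.pi_ne_zero
    simp only [ContinuousMap.smul_apply, fourier_coe_apply, smul_eq_mul, mul_pow,
      ← Complex.exp_nat_mul]
    rw [mul_assoc]
    congr 3
    push_cast
    field_simp
  rw [M2_sq_eq_integral_haarAddCircle sum_apply]
  simpa [abs_of_nonneg hr] using
    hasSum_norm_sq_of_hasSum_fourier Nat.cast_injective summable_fourier.hasSum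

end CircleMean

theorem hasSum_deriv_of_hasFPowerSeriesOnBall {𝕜 E : Type*} [NontriviallyNormedField 𝕜]
    [NormedAddCommGroup E] [NormedSpace 𝕜 E] [CompleteSpace E] {f : 𝕜 → E}
    {p : FormalMultilinearSeries 𝕜 𝕜 E} {x y : 𝕜} {R : ℝ≥0∞} (hf : HasFPowerSeriesOnBall f p x R)
    (hy : y ∈ eball 0 R) :
    HasSum (fun n : ℕ ↦ y ^ n • (n + 1) • p.coeff (n + 1)) (deriv f (x + y)) := by
  have h := (hf.fderiv.hasSum hy).mapL (ContinuousLinearMap.apply 𝕜 E 1)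
  simpa [FormalMultilinearSeries.apply_eq_pow_smul_coeff,
    FormalMultilinearSeries.derivSeries_coeff_one] using h

theorem eball_one_eq_ball {α : Type*} [PseudoMetricSpace α] (x : α) : eball x 1 = ball x 1 := by
  simpa using eball_ofReal (x := x) (ε := 1)

theorem hasFPowerSeriesOnBall_of_norm_le {𝕜 : Type*} [NontriviallyNormedField 𝕜] [CompleteSpace 𝕜]
    {c : ℕ → 𝕜} {C : ℝ} (hc : ∀ n, ‖c n‖ ≤ C) {f : 𝕜 → 𝕜}
    (hf : ∀ z ∈ ball (0 : 𝕜) 1, f z = ∑' n, c n * z ^ n) :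
    HasFPowerSeriesOnBall f (FormalMultilinearSeries.ofScalars 𝕜 c) 0 1 := by
  have one_le_radius : 1 ≤ (FormalMultilinearSeries.ofScalars 𝕜 c).radius := by
    simpa using (FormalMultilinearSeries.ofScalars 𝕜 c).le_radius_of_bound (r := 1) C
      (by simpa [FormalMultilinearSeries.ofScalars_norm] using hc)
  refine (((FormalMultilinearSeries.ofScalars 𝕜 c).hasFPowerSeriesOnBall
    (one_pos.trans_le one_le_radius)).mono one_pos one_le_radius).congr fun z hz ↦ ?_
  rw [eball_one_eq_ball] at hz
  simp [hf z hz, FormalMultilinearSeries.sum, mul_comm]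

theorem pow_succ_div_le_sum_range_succ_pow (p N : ℕ) :
    (N : ℝ) ^ (p + 1) / (p + 1) ≤ ∑ n ∈ Finset.range N, ((n : ℝ) + 1) ^ p := by
  have h : MonotoneOn (fun x : ℝ ↦ x ^ p) (Icc 0 (0 + N)) :=
    fun x hx y _ hxy ↦ pow_le_pow_left₀ hx.1 hxy p
  simpa using h.integral_le_sum

theorem one_half_le_one_sub_inv_pow {N : ℕ} (hN : 1 ≤ N) :
    (1 / 2 : ℝ) ≤ (1 - (4 * (N : ℝ))⁻¹) ^ (2 * N) := by
  have hN' : (1 : ℝ) ≤ N := mod_cast hN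
  have inv_le : (4 * (N : ℝ))⁻¹ ≤ 1 := inv_le_one_of_one_le₀ (by linarith)
  calc (1 / 2 : ℝ) = 1 + ↑(2 * N) * -(4 * (N : ℝ))⁻¹ := by
        push_cast; field_simp; norm_num
    _ ≤ (1 + -(4 * (N : ℝ))⁻¹) ^ (2 * N) := one_add_mul_le_pow (by linarith) _
    _ = (1 - (4 * (N : ℝ))⁻¹) ^ (2 * N) := by rw [← sub_eq_add_neg]

theorem exists_pos_le_div_iff_exists_natCast_mul_le {b : ℕ → ℝ} :
    (∃ C > 0, ∀ n : ℕ, 1 ≤ n → b n ≤ C / n) ↔ ∃ C, ∀ n : ℕ, n * b n ≤ C := by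
  constructor
  · rintro ⟨C, hC, hb⟩
    refine ⟨C, fun n ↦ ?_⟩
    rcases n.eq_zero_or_pos with rfl | hn
    · simpa using hC.le
    · exact (le_div_iff₀' (mod_cast hn)).1 (hb n hn)
  · rintro ⟨C, hC⟩
    exact ⟨max C 1, by positivity, fun n hn ↦
      (le_div_iff₀' (mod_cast hn)).2 ((hC n).trans (le_max_left C 1))⟩

theorem memLambda_iff_exists_one_sub_mul_sq_le {f : ℂ → ℂ} :
    MemLambda f ↔ DifferentiableOn ℂ f (ball (0 : ℂ) 1) ∧
      ∃ C : ℝ, ∀ r ∈ Ico (0 : ℝ) 1, (1 - r) * M2 (deriv f) r ^ 2 ≤ C := by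
  have sq_eq {r : ℝ} (hr : r ∈ Ico (0 : ℝ) 1) :
      (√(1 - r) * M2 (deriv f) r) ^ 2 = (1 - r) * M2 (deriv f) r ^ 2 := by
    rw [mul_pow, Real.sq_sqrt (sub_nonneg.2 hr.2.le)]
  refine and_congr_right fun _ ↦ ⟨fun ⟨C, hC⟩ ↦ ⟨C ^ 2, fun r hr ↦ ?_⟩,
    fun ⟨C, hC⟩ ↦ ⟨√C, fun r hr ↦ Real.le_sqrt_of_sq_le ((sq_eq hr).trans_le (hC r hr))⟩⟩
  rw [← sq_eq hr]
  exact pow_le_pow_left₀ (mul_nonneg (Real.sqrt_nonneg _) (Real.sqrt_nonneg _)) (hC r hr) 2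

section PowerSeries

variable {f : ℂ → ℂ} {p : FormalMultilinearSeries ℂ ℂ ℂ} {r C : ℝ}

theorem hasSum_M2_deriv_sq (hf : HasFPowerSeriesOnBall f p 0 1) (hr : r ∈ Ico (0 : ℝ) 1) :
    HasSum (fun n : ℕ ↦ ((n + 1) * ‖p.coeff (n + 1)‖ * r ^ n) ^ 2) (M2 (deriv f) r ^ 2) := by
  have hasSum_deriv : ∀ z ∈ sphere (0 : ℂ) r,
      HasSum (fun n : ℕ ↦ (n + 1) * p.coeff (n + 1) * z ^ n) (deriv f z) := by
    intro z hz
    have hz_mem : z ∈ eball (0 : ℂ) 1 := eball_one_eq_ball (0 : ℂ) ▸ sphere_subset_ball hr.2 hz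
    simpa [mul_comm] using hasSum_deriv_of_hasFPowerSeriesOnBall hf hz_mem
  have norm_natCast_add_one (n : ℕ) : ‖(n : ℂ) + 1‖ = n + 1 := mod_cast Complex.norm_natCast (n + 1)
  simpa [norm_natCast_add_one] using hasSum_M2_sq_of_hasSum_pow hr.1 hasSum_deriv

theorem one_sub_mul_M2_deriv_sq_le (hf : HasFPowerSeriesOnBall f p 0 1)
    (hC : ∀ n : ℕ, n * ‖p.coeff n‖ ≤ C) (hr : r ∈ Ico (0 : ℝ) 1) :
    (1 - r) * M2 (deriv f) r ^ 2 ≤ C ^ 2 := by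
  have term_le (n : ℕ) : ((n + 1) * ‖p.coeff (n + 1)‖ * r ^ n) ^ 2 ≤ C ^ 2 * r ^ n := by
    have coeff_le : (n + 1) * ‖p.coeff (n + 1)‖ ≤ C := mod_cast hC (n + 1)
    have sq_le : (r ^ n) ^ 2 ≤ r ^ n :=
      pow_le_of_le_one (pow_nonneg hr.1 n) (pow_le_one₀ hr.1 hr.2.le) two_ne_zero
    rw [mul_pow]
    gcongr
  have sq_le : M2 (deriv f) r ^ 2 ≤ C ^ 2 * (1 - r)⁻¹ :=
    hasSum_le term_le (hasSum_M2_deriv_sq hf hr)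
      ((hasSum_geometric_of_lt_one hr.1 hr.2).mul_left (C ^ 2))
  rwa [← div_eq_mul_inv, le_div_iff₀' (sub_pos.2 hr.2)] at sq_le

theorem cube_mul_sq_coeff_le_M2_deriv_sq (hf : HasFPowerSeriesOnBall f p 0 1)
    (hp : Antitone fun n ↦ ‖p.coeff n‖) (hr : r ∈ Ico (0 : ℝ) 1) (N : ℕ) :
    (N : ℝ) ^ 3 / 3 * (‖p.coeff N‖ ^ 2 * r ^ (2 * N)) ≤ M2 (deriv f) r ^ 2 := by
  have term_ge : ∀ n ∈ Finset.range N, ((n : ℝ) + 1) ^ 2 * (‖p.coeff N‖ ^ 2 * r ^ (2 * N)) ≤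
      ((n + 1) * ‖p.coeff (n + 1)‖ * r ^ n) ^ 2 := by
    intro n hn
    have hnN : n < N := Finset.mem_range.1 hn
    have coeff_ge : ‖p.coeff N‖ ≤ ‖p.coeff (n + 1)‖ := hp hnN
    have pow_ge : r ^ N ≤ r ^ n := pow_le_pow_of_le_one hr.1 hr.2.le hnN.le
    have := hr.1
    rw [mul_comm 2 N, pow_mul, ← mul_pow, ← mul_pow, ← mul_assoc]
    gcongr
  calc (N : ℝ) ^ 3 / 3 * (‖p.coeff N‖ ^ 2 * r ^ (2 * N))
      ≤ (∑ n ∈ Finset.range N, ((n : ℝ) + 1) ^ 2) * (‖p.coeff N‖ ^ 2 * r ^ (2 * N)) := by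
        have := hr.1
        gcongr
        exact_mod_cast pow_succ_div_le_sum_range_succ_pow 2 N
    _ ≤ ∑ n ∈ Finset.range N, ((n + 1) * ‖p.coeff (n + 1)‖ * r ^ n) ^ 2 := by
        rw [Finset.sum_mul]
        exact Finset.sum_le_sum term_ge
    _ ≤ M2 (deriv f) r ^ 2 :=
        sum_le_hasSum _ (fun _ _ ↦ sq_nonneg _) (hasSum_M2_deriv_sq hf hr)

theorem sq_natCast_mul_norm_coeff_le (hf : HasFPowerSeriesOnBall f p 0 1)
    (hp : Antitone fun n ↦ ‖p.coeff n‖)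
    (hC : ∀ r ∈ Ico (0 : ℝ) 1, (1 - r) * M2 (deriv f) r ^ 2 ≤ C) {N : ℕ} (hN : 1 ≤ N) :
    (N * ‖p.coeff N‖) ^ 2 ≤ 24 * C := by
  have hN' : (1 : ℝ) ≤ N := mod_cast hN
  set δ : ℝ := (4 * (N : ℝ))⁻¹ with hδ
  have δ_pos : 0 < δ := by positivity
  have δ_le : δ ≤ 1 := inv_le_one_of_one_le₀ (by linarith)
  have hr : 1 - δ ∈ Ico (0 : ℝ) 1 := ⟨by linarith, by linarith⟩
  calc (N * ‖p.coeff N‖) ^ 2 = 24 * (δ * ((N : ℝ) ^ 3 / 3 * (‖p.coeff N‖ ^ 2 * (1 / 2)))) := by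
        rw [hδ]; field_simp; ring
    _ ≤ 24 * (δ * ((N : ℝ) ^ 3 / 3 * (‖p.coeff N‖ ^ 2 * (1 - δ) ^ (2 * N)))) := by
        gcongr
        exact one_half_le_one_sub_inv_pow hN
    _ ≤ 24 * (δ * M2 (deriv f) (1 - δ) ^ 2) := by
        gcongr
        exact cube_mul_sq_coeff_le_M2_deriv_sq hf hp hr N
    _ ≤ 24 * C := by
        gcongr
        simpa using hC (1 - δ) hr

theorem memLambda_iff_exists_natCast_mul_norm_coeff_le (hf : HasFPowerSeriesOnBall f p 0 1)
    (hp : Antitone fun n ↦ ‖p.coeff n‖) :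
    MemLambda f ↔ ∃ C, ∀ n : ℕ, n * ‖p.coeff n‖ ≤ C := by
  rw [memLambda_iff_exists_one_sub_mul_sq_le]
  constructor
  · rintro ⟨-, C, hC⟩
    refine ⟨√(24 * C), fun n ↦ ?_⟩
    rcases n.eq_zero_or_pos with rfl | hn
    · simp
    · exact Real.le_sqrt_of_sq_le (sq_natCast_mul_norm_coeff_le hf hp hC hn)
  · rintro ⟨C, hC⟩
    exact ⟨eball_one_eq_ball (0 : ℂ) ▸ hf.differentiableOn, C ^ 2,
      fun r hr ↦ one_sub_mul_M2_deriv_sq_le hf hC hr⟩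

end PowerSeries

theorem memLambda_iff_of_antitone_general (c : ℕ → ℂ) (hmono : Antitone fun n ↦ ‖c n‖)
    (f : ℂ → ℂ) (hf : ∀ z ∈ ball (0 : ℂ) 1, f z = ∑' n : ℕ, c n * z ^ n) :
    MemLambda f ↔ ∃ C > 0, ∀ n : ℕ, 1 ≤ n → ‖c n‖ ≤ C / n := by
  have hasFPowerSeries := hasFPowerSeriesOnBall_of_norm_le (fun n ↦ hmono n.zero_le) hf
  rw [exists_pos_le_div_iff_exists_natCast_mul_le]
  simpa using memLambda_iff_exists_natCast_mul_norm_coeff_le hasFPowerSeries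
    (by simpa [FormalMultilinearSeries.coeff_ofScalars] using hmono)

/-- Lemma 3.2: for a decreasing sequence of nonnegative numbers `(a_n)`, the function
`f(z) = ∑ a_n zⁿ` belongs to `Λ²_{1/2}` iff `a_n = O(1/n)`. -/
theorem memLambda_iff_of_antitone (a : ℕ → ℝ)
    (hmono : Antitone a) (hnonneg : ∀ n, 0 ≤ a n) (f : ℂ → ℂ)
    (hf : ∀ z ∈ ball (0:ℂ) 1, f z = ∑' n : ℕ, (a n : ℂ) * z ^ n) :
    MemLambda f ↔ ∃ C > 0, ∀ n : ℕ, 1 ≤ n → a n ≤ C / n := by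
  simpa [abs_of_nonneg (hnonneg _)] using memLambda_iff_of_antitone_general (fun n ↦ (a n : ℂ))
    (by simpa [abs_of_nonneg (hnonneg _)] using hmono) f hf

end PaperHankel
end
end

section
/- Let μ be a finite positive Borel measure on [0,1). Then μ is a 1-logarithmic 1-Carleson measure if and only if ∫_{[0,1)} t^n log(1/(1-t)) dμ(t) = O(1/n) as n → ∞. -/
open MeasureTheory Set Metric ENNReal

noncomputable section

namespace PaperHankel

/-!
Put `dν(t) = log(1/(1-t))^α dμ(t)`. The logarithmic Carleson condition on `μ` is the plain condition
`ν([t,1)) = O((1-t)^s)`: since `log(2/(1-t))` is `log(1/(1-x))` at the midpoint `x` of `[t,1)`,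
repeatedly halving `[t,1)` towards `1` bounds `ν([t,1))` by a geometric series, and near `1` the two
logarithms are comparable. The plain condition is in turn equivalent to `∫ tⁿ dν = O(n⁻ˢ)`: the
layer cake formula turns the moment into `∫₀¹ n xⁿ⁻¹ ν([x,1)) dx`, and `xⁿ⁻¹ ≤ e · e^{-n(1-x)}`
reduces it to a Gamma integral, while conversely `tⁿ ≥ 1/2` for `n` about `1/(2(1-t))`.
-/

theorem exists_pos_forall_le_ofReal_mul_iff {ι : Sort*} {p : ι → Prop} {f : ι → ℝ≥0∞} {g : ι → ℝ} :
    (∃ C > 0, ∀ i, p i → f i ≤ ENNReal.ofReal (C * g i)) ↔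
      ∃ c ≠ ∞, ∀ i, p i → f i ≤ c * ENNReal.ofReal (g i) := by
  constructor
  · rintro ⟨C, hC, h⟩
    exact ⟨ENNReal.ofReal C, ofReal_ne_top, fun i hi ↦ (h i hi).trans_eq (ofReal_mul hC.le)⟩
  · rintro ⟨c, hc, h⟩
    refine ⟨c.toReal + 1, by positivity, fun i hi ↦ (h i hi).trans ?_⟩
    rw [ofReal_mul (by positivity)]
    gcongr
    exact (le_ofReal_iff_toReal_le hc (by positivity)).2 (by linarith)

theorem tsum_ofReal_pow {x : ℝ} (hx : 0 ≤ x) (hx1 : x < 1) :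
    ∑' k : ℕ, ENNReal.ofReal x ^ k = ENNReal.ofReal (1 - x)⁻¹ := by
  rw [ENNReal.tsum_geometric, ofReal_inv_of_pos (sub_pos.2 hx1), ofReal_sub _ hx, ofReal_one]

section MonotoneOn

variable {X : Type*} [LinearOrder X] [TopologicalSpace X] [OrderClosedTopology X]
  [MeasurableSpace X] [OpensMeasurableSpace X] {μ : Measure X} {w : X → ℝ≥0∞} {a b : X}

theorem setLIntegral_Ico_le_measure_mul_of_monotoneOn (hw : MonotoneOn w (Icc a b)) :
    ∫⁻ x in Ico a b, w x ∂μ ≤ μ (Ico a b) * w b := calc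
  _ ≤ ∫⁻ _ in Ico a b, w b ∂μ := setLIntegral_mono' measurableSet_Ico fun _ hx ↦
    hw (Ico_subset_Icc_self hx) (right_mem_Icc.2 (hx.1.trans hx.2.le)) hx.2.le
  _ = _ := by rw [setLIntegral_const, mul_comm]

theorem measure_mul_le_setLIntegral_Ico_of_monotoneOn (hw : MonotoneOn w (Ico a b)) :
    μ (Ico a b) * w a ≤ ∫⁻ x in Ico a b, w x ∂μ := calc
  _ = ∫⁻ _ in Ico a b, w a ∂μ := by rw [setLIntegral_const, mul_comm]
  _ ≤ _ := setLIntegral_mono' measurableSet_Ico fun _ hx ↦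
    hw (left_mem_Ico.2 (hx.1.trans_lt hx.2)) hx hx.1

end MonotoneOn

section Tail

variable {c : ℝ≥0∞} {s : ℝ}

theorem Ico_subset_iUnion_Ico_dyadic {t : ℝ} (ht : t < 1) :
    Ico t 1 ⊆ ⋃ k : ℕ, Ico (1 - (1 - t) * (1 / 2) ^ k) (1 - (1 - t) * (1 / 2) ^ (k + 1)) := by
  intro x hx
  have h1t : 0 < 1 - t := sub_pos.2 ht
  obtain ⟨k, hk, hk'⟩ := exists_nat_pow_near_of_lt_one (x := (1 - x) / (1 - t)) (y := (1 / 2 : ℝ))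
    (div_pos (sub_pos.2 hx.2) h1t) ((div_le_one h1t).2 (by linarith [hx.1]))
    (by norm_num) (by norm_num)
  rw [lt_div_iff₀' h1t] at hk
  rw [div_le_iff₀' h1t] at hk'
  exact mem_iUnion.2 ⟨k, by linarith, by linarith⟩

theorem setLIntegral_Ico_le_of_measure_mul_midpoint_le {μ : Measure ℝ} {w : ℝ → ℝ≥0∞}
    (hs : 0 < s) (hw : MonotoneOn w (Ico 0 1))
    (h : ∀ t ∈ Ico (0 : ℝ) 1, μ (Ico t 1) * w ((1 + t) / 2) ≤ c * ENNReal.ofReal ((1 - t) ^ s))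
    {t : ℝ} (ht : t ∈ Ico (0 : ℝ) 1) :
    ∫⁻ x in Ico t 1, w x ∂μ ≤
      c * ENNReal.ofReal (1 - (1 / 2) ^ s)⁻¹ * ENNReal.ofReal ((1 - t) ^ s) := by
  set r : ℕ → ℝ := fun k ↦ 1 - (1 - t) * (1 / 2) ^ k
  have h1t : 0 < 1 - t := sub_pos.2 ht.2
  have hr_mem (k : ℕ) : r k ∈ Ico (0 : ℝ) 1 := by
    have hle : (1 - t) * (1 / 2) ^ k ≤ 1 - t :=
      mul_le_of_le_one_right h1t.le (pow_le_one₀ (by norm_num) (by norm_num))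
    have hpos : 0 < (1 - t) * (1 / 2) ^ k := by positivity
    exact ⟨by linarith [ht.1], by linarith⟩
  have hr_succ (k : ℕ) : r (k + 1) = (1 + r k) / 2 := by ring
  have hr_pow (k : ℕ) : (1 - r k) ^ s = (1 - t) ^ s * ((1 / 2) ^ s) ^ k := by
    rw [show 1 - r k = (1 - t) * (1 / 2) ^ k by ring, Real.mul_rpow h1t.le (by positivity),
      ← Real.rpow_pow_comm (by norm_num)]
  have hpiece (k : ℕ) : ∫⁻ x in Ico (r k) (r (k + 1)), w x ∂μ ≤
      c * ENNReal.ofReal ((1 - t) ^ s) * ENNReal.ofReal ((1 / 2) ^ s) ^ k := calc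
    _ ≤ μ (Ico (r k) (r (k + 1))) * w (r (k + 1)) :=
        setLIntegral_Ico_le_measure_mul_of_monotoneOn <| hw.mono fun _ hx ↦
          ⟨(hr_mem k).1.trans hx.1, hx.2.trans_lt (hr_mem _).2⟩
    _ ≤ μ (Ico (r k) 1) * w ((1 + r k) / 2) := by
        rw [hr_succ]
        gcongr
        exact hr_succ k ▸ (hr_mem _).2.le
    _ ≤ c * ENNReal.ofReal ((1 - r k) ^ s) := h _ (hr_mem k)
    _ = _ := by
        rw [hr_pow, ofReal_mul (by positivity), ofReal_pow (by positivity), mul_assoc]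
  calc ∫⁻ x in Ico t 1, w x ∂μ
      ≤ ∫⁻ x in ⋃ k, Ico (r k) (r (k + 1)), w x ∂μ :=
        lintegral_mono_set (Ico_subset_iUnion_Ico_dyadic ht.2)
    _ ≤ ∑' k, ∫⁻ x in Ico (r k) (r (k + 1)), w x ∂μ := lintegral_iUnion_le _ _
    _ ≤ ∑' k, c * ENNReal.ofReal ((1 - t) ^ s) * ENNReal.ofReal ((1 / 2) ^ s) ^ k :=
        ENNReal.tsum_le_tsum hpiece
    _ = _ := by
        have hlt : (1 / 2 : ℝ) ^ s < 1 := Real.rpow_lt_one (by norm_num) (by norm_num) hs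
        rw [ENNReal.tsum_mul_left, tsum_ofReal_pow (by positivity) hlt, mul_right_comm]

end Tail

section Moments

variable {ν : Measure ℝ} {c : ℝ≥0∞} {p s : ℝ}

theorem setLIntegral_rpow_eq_setLIntegral_measure_Ico_mul (hp : 0 < p) :
    ∫⁻ t in Ico (0 : ℝ) 1, ENNReal.ofReal (t ^ p) ∂ν =
      ENNReal.ofReal p *
        ∫⁻ x in Ioo (0 : ℝ) 1, ν (Ico x 1) * ENNReal.ofReal (x ^ (p - 1)) := by
  have hnonneg : 0 ≤ᵐ[ν.restrict (Ico 0 1)] fun t : ℝ ↦ t :=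
    (ae_restrict_mem measurableSet_Ico).mono fun t ht ↦ ht.1
  rw [lintegral_rpow_eq_lintegral_meas_le_mul _ hnonneg aemeasurable_id' hp, ← Ioi_inter_Iio,
    inter_comm, ← setLIntegral_indicator measurableSet_Iio]
  congr 1
  refine setLIntegral_congr_fun measurableSet_Ioi fun x (hx : 0 < x) ↦ ?_
  have htail : ν.restrict (Ico 0 1) {t | x ≤ t} = ν (Ico x 1) := by
    rw [Measure.restrict_apply (measurableSet_le measurable_const measurable_id')]
    congr 1
    ext t
    exact ⟨fun h ↦ ⟨h.1, h.2.2⟩, fun h ↦ ⟨h.1, hx.le.trans h.1, h.2⟩⟩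
  rw [htail]
  by_cases hx1 : x ∈ Iio 1
  · rw [indicator_of_mem hx1]
  · rw [indicator_of_notMem hx1, Ico_eq_empty (by simpa using hx1), measure_empty, zero_mul]

theorem lintegral_Ioi_rpow_mul_exp_neg_mul (hs : -1 < s) (hp : 0 < p) :
    ∫⁻ u in Ioi (0 : ℝ), ENNReal.ofReal (u ^ s * Real.exp (-(p * u))) =
      ENNReal.ofReal ((1 / p) ^ (s + 1) * Real.Gamma (s + 1)) := by
  have hint : IntegrableOn (fun u : ℝ ↦ u ^ s * Real.exp (-(p * u))) (Ioi 0) := by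
    simpa only [Real.rpow_one, neg_mul] using integrableOn_rpow_mul_exp_neg_mul_rpow hs one_pos hp
  rw [← Real.integral_rpow_mul_exp_neg_mul_Ioi (by linarith) hp, add_sub_cancel_right,
    ofReal_integral_eq_lintegral_ofReal hint]
  filter_upwards [ae_restrict_mem measurableSet_Ioi] with u (hu : 0 < u)
  positivity

theorem rpow_sub_one_le_exp_one_mul_exp_neg {x : ℝ} (hp : 1 ≤ p) (hx : x ∈ Icc (0 : ℝ) 1) :
    x ^ (p - 1) ≤ Real.exp 1 * Real.exp (-(p * (1 - x))) := calc
  x ^ (p - 1) ≤ Real.exp (x - 1) ^ (p - 1) :=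
    Real.rpow_le_rpow hx.1 (by simpa using Real.add_one_le_exp (x - 1)) (by linarith)
  _ = Real.exp ((x - 1) * (p - 1)) := (Real.exp_mul _ _).symm
  _ ≤ Real.exp (1 + -(p * (1 - x))) := Real.exp_le_exp.2 (by linarith [hx.1])
  _ = _ := Real.exp_add _ _

theorem setLIntegral_one_sub_rpow_mul_rpow_le (hs : -1 < s) (hp : 1 ≤ p) :
    ENNReal.ofReal p * ∫⁻ x in Ioo (0 : ℝ) 1, ENNReal.ofReal ((1 - x) ^ s * x ^ (p - 1)) ≤
      ENNReal.ofReal (Real.exp 1 * Real.Gamma (s + 1)) * ENNReal.ofReal (p ^ (-s)) := by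
  have hp0 : 0 < p := by linarith
  set F : ℝ → ℝ≥0∞ := fun u ↦ ENNReal.ofReal (u ^ s * Real.exp (-(p * u))) with hF
  have hpointwise : ∀ x ∈ Ioo (0 : ℝ) 1,
      ENNReal.ofReal ((1 - x) ^ s * x ^ (p - 1)) ≤ ENNReal.ofReal (Real.exp 1) * F (1 - x) := by
    intro x hx
    have h1x : 0 ≤ 1 - x := by linarith [hx.2]
    rw [hF, ← ofReal_mul (by positivity), mul_left_comm]
    gcongr
    exact rpow_sub_one_le_exp_one_mul_exp_neg hp ⟨hx.1.le, hx.2.le⟩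
  have hreflect : ∫⁻ x in Iio (1 : ℝ), F (1 - x) = ∫⁻ u in Ioi (0 : ℝ), F u := by
    have := (volume.measurePreserving_sub_left (1 : ℝ)).setLIntegral_comp_preimage
      (measurableSet_Ioi (a := 0)) (f := F) (by fun_prop)
    simpa using this
  calc _ ≤ ENNReal.ofReal p *
        ∫⁻ x in Ioo (0 : ℝ) 1, ENNReal.ofReal (Real.exp 1) * F (1 - x) := by
        gcongr ENNReal.ofReal p * ?_
        exact setLIntegral_mono' measurableSet_Ioo hpointwise
    _ ≤ ENNReal.ofReal p * (ENNReal.ofReal (Real.exp 1) * ∫⁻ u in Ioi (0 : ℝ), F u) := by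
        rw [lintegral_const_mul _ (by fun_prop), ← hreflect]
        gcongr
        exact Ioo_subset_Iio_self
    _ = _ := by
        have hGamma : 0 ≤ Real.Gamma (s + 1) := Real.Gamma_nonneg_of_nonneg (by linarith)
        rw [lintegral_Ioi_rpow_mul_exp_neg_mul hs hp0, ← ofReal_mul (by positivity),
          ← ofReal_mul (by positivity), ← ofReal_mul (by positivity), one_div,
          Real.inv_rpow hp0.le, Real.rpow_add_one hp0.ne', Real.rpow_neg hp0.le]
        congr 1
        field_simp

theorem setLIntegral_rpow_le_of_measure_Ico_le (hs : -1 < s) (hp : 1 ≤ p)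
    (h : ∀ t ∈ Ico (0 : ℝ) 1, ν (Ico t 1) ≤ c * ENNReal.ofReal ((1 - t) ^ s)) :
    ∫⁻ t in Ico (0 : ℝ) 1, ENNReal.ofReal (t ^ p) ∂ν ≤
      c * ENNReal.ofReal (Real.exp 1 * Real.Gamma (s + 1)) * ENNReal.ofReal (p ^ (-s)) := calc
  _ = ENNReal.ofReal p * ∫⁻ x in Ioo (0 : ℝ) 1, ν (Ico x 1) * ENNReal.ofReal (x ^ (p - 1)) :=
    setLIntegral_rpow_eq_setLIntegral_measure_Ico_mul (by linarith)
  _ ≤ ENNReal.ofReal p *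
      ∫⁻ x in Ioo (0 : ℝ) 1, c * ENNReal.ofReal ((1 - x) ^ s * x ^ (p - 1)) := by
    gcongr ENNReal.ofReal p * ?_
    refine setLIntegral_mono' measurableSet_Ioo fun x hx ↦ ?_
    rw [ofReal_mul (Real.rpow_nonneg (by linarith [hx.2]) _), ← mul_assoc]
    gcongr
    exact h x ⟨hx.1.le, hx.2⟩
  _ ≤ _ := by
    rw [lintegral_const_mul _ (by fun_prop), mul_left_comm, mul_assoc]
    gcongr c * ?_
    exact setLIntegral_one_sub_rpow_mul_rpow_le hs hp

theorem exists_nat_one_le_four_mul_and_half_le_pow {t : ℝ} (ht : t ∈ Ico (1 / 2 : ℝ) 1) :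
    ∃ n : ℕ, 1 ≤ n ∧ 1 ≤ 4 * (1 - t) * n ∧ 1 / 2 ≤ t ^ n := by
  have h1t : 0 < 1 - t := sub_pos.2 ht.2
  set x := 1 / (2 * (1 - t)) with hx
  have hx_mul : x * (1 - t) = 1 / 2 := by rw [hx]; field_simp
  have hx_one : 1 ≤ x := by rw [hx, le_div_iff₀ (by positivity)]; linarith [ht.1]
  have hfloor : 1 ≤ ⌊x⌋₊ := (Nat.one_le_floor_iff x).2 hx_one
  have hfloor_le : (⌊x⌋₊ : ℝ) ≤ x := Nat.floor_le (by linarith)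
  have hle_floor : x ≤ 2 * ⌊x⌋₊ := by
    have : (1 : ℝ) ≤ ⌊x⌋₊ := by exact_mod_cast hfloor
    linarith [Nat.lt_floor_add_one x]
  refine ⟨⌊x⌋₊, hfloor, by nlinarith, ?_⟩
  calc (1 / 2 : ℝ) ≤ 1 + ⌊x⌋₊ * (t - 1) := by nlinarith
    _ ≤ (1 + (t - 1)) ^ ⌊x⌋₊ := one_add_mul_le_pow (by linarith [ht.1]) _
    _ = t ^ ⌊x⌋₊ := by rw [add_sub_cancel]

theorem measure_Ico_mul_pow_le_setLIntegral_pow {t : ℝ} (ht : 0 ≤ t) (n : ℕ) :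
    ν (Ico t 1) * ENNReal.ofReal (t ^ n) ≤ ∫⁻ x in Ico (0 : ℝ) 1, ENNReal.ofReal (x ^ n) ∂ν := calc
  _ ≤ ∫⁻ x in Ico t 1, ENNReal.ofReal (x ^ n) ∂ν :=
    measure_mul_le_setLIntegral_Ico_of_monotoneOn fun _ hx _ _ hxy ↦
      ofReal_le_ofReal (pow_le_pow_left₀ (ht.trans hx.1) hxy n)
  _ ≤ _ := lintegral_mono_set (Ico_subset_Ico_left ht)

theorem measure_Ico_le_of_setLIntegral_pow_le (hs : 0 ≤ s)
    (h : ∀ n : ℕ, 1 ≤ n →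
      ∫⁻ x in Ico (0 : ℝ) 1, ENNReal.ofReal (x ^ n) ∂ν ≤ c * ENNReal.ofReal ((n : ℝ) ^ (-s)))
    {t : ℝ} (ht : t ∈ Ico (1 / 2 : ℝ) 1) :
    ν (Ico t 1) ≤ c * ENNReal.ofReal (2 * 4 ^ s) * ENNReal.ofReal ((1 - t) ^ s) := by
  obtain ⟨n, hn, hn_inv, hn_pow⟩ := exists_nat_one_le_four_mul_and_half_le_pow ht
  have h1t : 0 < 1 - t := sub_pos.2 ht.2
  have ht0 : 0 ≤ t := by linarith [ht.1]
  have hn_pos : (0 : ℝ) < n := by exact_mod_cast hn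
  have hrate : (n : ℝ) ^ (-s) ≤ 4 ^ s * (1 - t) ^ s := by
    rw [Real.rpow_neg hn_pos.le, ← Real.inv_rpow hn_pos.le,
      ← Real.mul_rpow (by norm_num) h1t.le]
    gcongr
    exact inv_le_of_inv_le₀ (by positivity) (by rwa [inv_le_iff_one_le_mul₀' (by positivity)])
  calc ν (Ico t 1) = 2 * (ν (Ico t 1) * ENNReal.ofReal (1 / 2)) := by
        rw [mul_left_comm, ← ofReal_ofNat 2, ← ofReal_mul two_pos.le]
        norm_num
    _ ≤ 2 * (ν (Ico t 1) * ENNReal.ofReal (t ^ n)) := by gcongr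
    _ ≤ 2 * (c * ENNReal.ofReal ((n : ℝ) ^ (-s))) := by
        gcongr 2 * ?_
        exact (measure_Ico_mul_pow_le_setLIntegral_pow ht0 n).trans (h n hn)
    _ ≤ 2 * (c * ENNReal.ofReal (4 ^ s * (1 - t) ^ s)) := by gcongr
    _ = _ := by
        rw [ofReal_mul (by positivity), ofReal_mul (by positivity), ofReal_ofNat]
        ring

end Moments

section LogWeight

variable {μ : Measure ℝ} {α s : ℝ}

/-- The measure `log(1/(1-t))^α dμ(t)`, whose plain Carleson condition is the logarithmic one for
`μ`. Only its restriction to `[0,1)` is meaningful: elsewhere the density is a junk value of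
`Real.log` and `Real.rpow`. -/
def logWeighted (μ : Measure ℝ) (α : ℝ) : Measure ℝ :=
  μ.withDensity fun t ↦ ENNReal.ofReal (Real.log (1 / (1 - t)) ^ α)

theorem log_one_div_one_sub_nonneg {t : ℝ} (ht : t ∈ Ico (0 : ℝ) 1) :
    0 ≤ Real.log (1 / (1 - t)) :=
  Real.log_nonneg ((one_le_div (sub_pos.2 ht.2)).2 (by linarith [ht.1]))

theorem monotoneOn_ofReal_log_rpow (hα : 0 ≤ α) :
    MonotoneOn (fun t : ℝ ↦ ENNReal.ofReal (Real.log (1 / (1 - t)) ^ α)) (Ico 0 1) := by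
  intro x hx y hy hxy
  have hx1 : 0 < 1 - x := sub_pos.2 hx.2
  have hy1 : 0 < 1 - y := sub_pos.2 hy.2
  have := log_one_div_one_sub_nonneg hx
  dsimp only
  gcongr

theorem setLIntegral_pow_logWeighted (n : ℕ) :
    ∫⁻ t in Ico (0 : ℝ) 1, ENNReal.ofReal (t ^ n) ∂logWeighted μ α =
      ∫⁻ t in Ico (0 : ℝ) 1, ENNReal.ofReal (t ^ n * Real.log (1 / (1 - t)) ^ α) ∂μ := by
  rw [logWeighted, setLIntegral_withDensity_eq_setLIntegral_mul μ (by fun_prop) (by fun_prop)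
    measurableSet_Ico]
  refine setLIntegral_congr_fun measurableSet_Ico fun t ht ↦ ?_
  rw [Pi.mul_apply, mul_comm, ofReal_mul (pow_nonneg ht.1 n)]

theorem isLogCarleson_iff_measure_mul_le [IsFiniteMeasure μ] :
    IsLogCarleson μ α s ↔ ∃ c ≠ ∞, ∀ t ∈ Ico (0 : ℝ) 1,
      μ (Ico t 1) * ENNReal.ofReal (Real.log (2 / (1 - t)) ^ α) ≤
        c * ENNReal.ofReal ((1 - t) ^ s) := by
  rw [← exists_pos_forall_le_ofReal_mul_iff]
  refine exists_congr fun C ↦ and_congr_right fun hC ↦ forall₂_congr fun t ht ↦ ?_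
  have h1t : 0 < 1 - t := sub_pos.2 ht.2
  rw [← ofReal_toReal (measure_ne_top μ (Ico t 1)), ← ofReal_mul toReal_nonneg,
    ofReal_le_ofReal_iff (by positivity), toReal_ofReal toReal_nonneg]

theorem logWeighted_Ico_le_of_measure_mul_le {c : ℝ≥0∞} (hα : 0 ≤ α) (hs : 0 < s)
    (h : ∀ t ∈ Ico (0 : ℝ) 1, μ (Ico t 1) * ENNReal.ofReal (Real.log (2 / (1 - t)) ^ α) ≤
      c * ENNReal.ofReal ((1 - t) ^ s)) {t : ℝ} (ht : t ∈ Ico (0 : ℝ) 1) :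
    logWeighted μ α (Ico t 1) ≤
      c * ENNReal.ofReal (1 - (1 / 2) ^ s)⁻¹ * ENNReal.ofReal ((1 - t) ^ s) := by
  rw [logWeighted, withDensity_apply _ measurableSet_Ico]
  refine setLIntegral_Ico_le_of_measure_mul_midpoint_le hs (monotoneOn_ofReal_log_rpow hα)
    (fun t ht ↦ ?_) ht
  have hmid : 1 / (1 - (1 + t) / 2) = 2 / (1 - t) := by
    rw [show 1 - (1 + t) / 2 = (1 - t) / 2 by ring, one_div_div]
  rw [hmid]
  exact h t ht

theorem log_two_div_le_two_mul_log_one_div {t : ℝ} (ht : t ∈ Ico (1 / 2 : ℝ) 1) :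
    Real.log (2 / (1 - t)) ≤ 2 * Real.log (1 / (1 - t)) := by
  have h1t : 0 < 1 - t := sub_pos.2 ht.2
  have hlog : Real.log 2 ≤ Real.log (1 / (1 - t)) :=
    Real.log_le_log two_pos ((le_div_iff₀ h1t).2 (by linarith [ht.1]))
  rw [← mul_one_div, Real.log_mul two_ne_zero (by positivity)]
  linarith

theorem measure_mul_le_two_rpow_mul_logWeighted_Ico (hα : 0 ≤ α) {t : ℝ}
    (ht : t ∈ Ico (1 / 2 : ℝ) 1) :
    μ (Ico t 1) * ENNReal.ofReal (Real.log (2 / (1 - t)) ^ α) ≤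
      ENNReal.ofReal (2 ^ α) * logWeighted μ α (Ico t 1) := by
  have ht0 : t ∈ Ico (0 : ℝ) 1 := ⟨by linarith [ht.1], ht.2⟩
  have hlog := log_two_div_le_two_mul_log_one_div ht
  have hlog_nonneg : 0 ≤ Real.log (2 / (1 - t)) :=
    Real.log_nonneg ((one_le_div (sub_pos.2 ht.2)).2 (by linarith [ht0.1]))
  calc _ ≤ μ (Ico t 1) * ENNReal.ofReal ((2 * Real.log (1 / (1 - t))) ^ α) := by gcongr
    _ = ENNReal.ofReal (2 ^ α) *
        (μ (Ico t 1) * ENNReal.ofReal (Real.log (1 / (1 - t)) ^ α)) := by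
      rw [Real.mul_rpow two_pos.le (log_one_div_one_sub_nonneg ht0), ofReal_mul (by positivity),
        mul_left_comm]
    _ ≤ _ := by
      rw [logWeighted, withDensity_apply _ measurableSet_Ico]
      gcongr ENNReal.ofReal (2 ^ α) * ?_
      exact measure_mul_le_setLIntegral_Ico_of_monotoneOn
        ((monotoneOn_ofReal_log_rpow hα).mono (Ico_subset_Ico_left ht0.1))

theorem measure_mul_le_of_lt_half (hα : 0 ≤ α) (hs : 0 ≤ s) {t : ℝ}
    (ht : t ∈ Ico (0 : ℝ) (1 / 2)) :
    μ (Ico t 1) * ENNReal.ofReal (Real.log (2 / (1 - t)) ^ α) ≤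
      μ univ * ENNReal.ofReal (Real.log 4 ^ α * 2 ^ s) * ENNReal.ofReal ((1 - t) ^ s) := by
  have h1t : 1 / 2 < 1 - t := by linarith [ht.2]
  have h1t0 : 0 < 1 - t := by linarith
  have hlog_nonneg : 0 ≤ Real.log (2 / (1 - t)) :=
    Real.log_nonneg ((one_le_div h1t0).2 (by linarith [ht.1]))
  have hlog : Real.log (2 / (1 - t)) ≤ Real.log 4 :=
    Real.log_le_log (by positivity) ((div_le_iff₀ h1t0).2 (by linarith))
  have hlog4 : 0 ≤ Real.log 4 ^ α := Real.rpow_nonneg (hlog_nonneg.trans hlog) α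
  have hone : 1 ≤ 2 ^ s * (1 - t) ^ s := by
    rw [← Real.mul_rpow two_pos.le h1t0.le]
    exact Real.one_le_rpow (by linarith) hs
  rw [mul_assoc, ← ofReal_mul (by positivity), mul_assoc (Real.log 4 ^ α)]
  gcongr
  · exact subset_univ _
  · exact (Real.rpow_le_rpow hlog_nonneg hlog hα).trans (le_mul_of_one_le_right hlog4 hone)

theorem isLogCarleson_of_logWeighted_Ico_le [IsFiniteMeasure μ] {c : ℝ≥0∞} (hc : c ≠ ∞)
    (hα : 0 ≤ α) (hs : 0 ≤ s)
    (h : ∀ t ∈ Ico (1 / 2 : ℝ) 1, logWeighted μ α (Ico t 1) ≤ c * ENNReal.ofReal ((1 - t) ^ s)) :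
    IsLogCarleson μ α s := by
  refine isLogCarleson_iff_measure_mul_le.2
    ⟨max (μ univ * ENNReal.ofReal (Real.log 4 ^ α * 2 ^ s)) (ENNReal.ofReal (2 ^ α) * c),
      by finiteness, fun t ht ↦ ?_⟩
  rcases lt_or_ge t (1 / 2) with hlt | hge
  · refine (measure_mul_le_of_lt_half hα hs ⟨ht.1, hlt⟩).trans ?_
    gcongr
    exact le_max_left _ _
  · calc _ ≤ ENNReal.ofReal (2 ^ α) * logWeighted μ α (Ico t 1) :=
          measure_mul_le_two_rpow_mul_logWeighted_Ico hα ⟨hge, ht.2⟩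
      _ ≤ ENNReal.ofReal (2 ^ α) * (c * ENNReal.ofReal ((1 - t) ^ s)) := by
          gcongr
          exact h t ⟨hge, ht.2⟩
      _ ≤ _ := by
          rw [← mul_assoc]
          gcongr
          exact le_max_right _ _

end LogWeight

theorem logCarleson_iff_moments_general (μ : Measure ℝ) [IsFiniteMeasure μ] {α s : ℝ}
    (hα : 0 ≤ α) (hs : 0 < s) :
    IsLogCarleson μ α s ↔ ∃ C > 0, ∀ n : ℕ, 1 ≤ n →
      ∫⁻ t in Ico (0 : ℝ) 1, ENNReal.ofReal (t ^ n * Real.log (1 / (1 - t)) ^ α) ∂μ ≤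
        ENNReal.ofReal (C / (n : ℝ) ^ s) := by
  have hrate (C : ℝ) (n : ℕ) : C / (n : ℝ) ^ s = C * (n : ℝ) ^ (-s) := by
    rw [Real.rpow_neg n.cast_nonneg, div_eq_mul_inv]
  simp only [hrate, exists_pos_forall_le_ofReal_mul_iff, ← setLIntegral_pow_logWeighted]
  constructor
  · rw [isLogCarleson_iff_measure_mul_le]
    rintro ⟨c, hc, hμ⟩
    have htail := fun t ht ↦ logWeighted_Ico_le_of_measure_mul_le hα hs hμ (t := t) ht
    have hmoment (n : ℕ) (hn : 1 ≤ n) :=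
      setLIntegral_rpow_le_of_measure_Ico_le (by linarith) (Nat.one_le_cast.2 hn) htail
    simp only [Real.rpow_natCast] at hmoment
    exact ⟨_, by finiteness, hmoment⟩
  · rintro ⟨c, hc, hmoment⟩
    exact isLogCarleson_of_logWeighted_Ico_le (by finiteness) hα hs.le
      fun t ht ↦ measure_Ico_le_of_setLIntegral_pow_le hs.le hmoment ht

/-- `μ` is a `1`-logarithmic `1`-Carleson measure iff
`∫_{[0,1)} tⁿ log(1/(1-t)) dμ(t) = O(1/n)`. -/
theorem logCarleson_iff_moments (μ : Measure ℝ) [IsFiniteMeasure μ]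
    (hsupp : μ (Ico (0:ℝ) 1)ᶜ = 0) :
    IsLogCarleson μ 1 1 ↔ LogMomentBigO μ := by
  simpa only [LogMomentBigO, Real.rpow_one] using logCarleson_iff_moments_general μ
    zero_le_one one_pos

end PaperHankel
end
end
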